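/- Let Ω ⊂ ℝ^d be a bounded Lipschitz domain, P ∈ ∂Ω, r > 0, and suppose that for some constants C₀ > C₁ > 10 one has Ω ⊂ B(P, C₀r) and B(P, C₁r) ∩ Ω = B(P, C₁r) ∩ {(x′, x_d) : x_d > η(x′)} for a Lipschitz function η : ℝ^{d−1} → ℝ. Then there exist two regular families of truncated nontangential cones {γ(Q) : Q ∈ ∂Ω} and {γ̃(Q) : Q ∈ ∂Ω}, a compact set K ⊂ Ω, and a constant C, such that for every function u biharmonic in Ω and every Q ∈ B(P, 5r) ∩ ∂Ω: S(∇u)(Q) ≤ C·{ S̃(D_d u)(Q) + sup_K |∇u| }, where S and S̃ are the square functions defined using the cones γ(Q) and γ̃(Q) respectively. -/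

import Mathlib

open MeasureTheory Metric Filter Set
open scoped ENNReal NNReal Topology RealInnerProductSpace

noncomputable section

/-- Euclidean space `ℝ^d`. -/
abbrev Euc (d : ℕ) := EuclideanSpace ℝ (Fin d)

variable {d : ℕ}

/-- The partial derivative `D_i u` in the `i`-th coordinate direction. -/
def pder (i : Fin d) (u : Euc d → ℝ) : Euc d → ℝ :=
  fun x => fderiv ℝ u x (EuclideanSpace.single i 1)

/-- The Laplacian `Δu = ∑ i, D_i D_i u`. -/
def lap (u : Euc d → ℝ) : Euc d → ℝ := fun x => ∑ i, pder i (pder i u) x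

/-- The bilaplacian `Δ²u`. -/
def bilap (u : Euc d → ℝ) : Euc d → ℝ := lap (lap u)

/-- `u` is biharmonic in the open set `Ω` : it is smooth there and `Δ²u = 0`. -/
def Biharmonic (Ω : Set (Euc d)) (u : Euc d → ℝ) : Prop :=
  ContDiffOn ℝ (⊤ : ℕ∞) u Ω ∧ ∀ x ∈ Ω, bilap u x = 0

/-- `|∇u|`. -/
def gnorm1 (u : Euc d → ℝ) : Euc d → ℝ :=
  fun x => Real.sqrt (∑ i, (pder i u x) ^ 2)

/-- `|∇²u|`. -/
def gnorm2 (u : Euc d → ℝ) : Euc d → ℝ :=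
  fun x => Real.sqrt (∑ i, ∑ j, (pder i (pder j u) x) ^ 2)

/-- `|∇³u|`. -/
def gnorm3 (u : Euc d → ℝ) : Euc d → ℝ :=
  fun x => Real.sqrt (∑ i, ∑ j, ∑ k, (pder i (pder j (pder k u)) x) ^ 2)

/-- The last ("vertical") coordinate `x_d` of a point of `ℝ^d`. -/
def vertCoord (d : ℕ) (x : Euc d) : ℝ :=
  if h : 0 < d then x ⟨d - 1, Nat.sub_lt h one_pos⟩ else 0

/-- The vertical unit vector `e_d`. -/
def vertDir (d : ℕ) : Euc d :=
  if h : 0 < d then EuclideanSpace.single ⟨d - 1, Nat.sub_lt h one_pos⟩ 1 else 0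

/-- The horizontal coordinates `x′` of a point of `ℝ^d`. -/
def graphCoord (d : ℕ) (x : Euc d) : Euc (d - 1) :=
  WithLp.toLp 2 fun i => x (Fin.castLE (Nat.sub_le d 1) i)

/-- The partial derivative `D_d u` in the vertical direction. -/
def pdLast (u : Euc d → ℝ) : Euc d → ℝ := fun x => fderiv ℝ u x (vertDir d)

/-- A bounded Lipschitz domain: a bounded connected open set whose boundary is covered by
finitely many open sets, in each of which, after a rigid motion, the boundary is the graph of
a Lipschitz function and the domain lies above the graph. -/
def IsLipschitzDomain (Ω : Set (Euc d)) : Prop :=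
  IsOpen Ω ∧ Bornology.IsBounded Ω ∧ IsConnected Ω ∧
  ∃ (N : ℕ) (U : Fin N → Set (Euc d)),
    (∀ i, IsOpen (U i)) ∧ (frontier Ω ⊆ ⋃ i, U i) ∧
    ∀ i, ∃ (R : Euc d ≃ᵢ Euc d) (M : ℝ≥0) (η : Euc (d - 1) → ℝ),
      LipschitzWith M η ∧
      U i ∩ Ω = U i ∩ (R ⁻¹' {x | η (graphCoord d x) < vertCoord d x}) ∧
      U i ∩ frontier Ω = U i ∩ (R ⁻¹' {x | vertCoord d x = η (graphCoord d x)})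

/-- The nontangential approach cone (aperture 1) with vertex `Q ∈ ∂Ω`. -/
def ntCone (Ω : Set (Euc d)) (Q : Euc d) : Set (Euc d) :=
  {x | x ∈ Ω ∧ dist x Q < 2 * Metric.infDist x (frontier Ω)}

/-- The nontangential maximal function `(w)*`. -/
def ntMax (Ω : Set (Euc d)) (w : Euc d → ℝ) (Q : Euc d) : ℝ≥0∞ :=
  ⨆ x ∈ ntCone Ω Q, (‖w x‖₊ : ℝ≥0∞)

/-- `w` has nontangential limit `L` at the boundary point `Q`. -/
def NTLim (Ω : Set (Euc d)) (w : Euc d → ℝ) (Q : Euc d) (L : ℝ) : Prop :=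
  Filter.Tendsto w (nhdsWithin Q (ntCone Ω Q)) (nhds L)

/-- The surface measure on `∂Ω`: the `(d-1)`-dimensional Hausdorff measure restricted
to the boundary. -/
def sMeasure (Ω : Set (Euc d)) : Measure (Euc d) :=
  (μH[(d : ℝ) - 1]).restrict (frontier Ω)

/-- The `L^p(∂Ω)` norm of the nontangential maximal function of `w`. -/
def ntMaxLp (Ω : Set (Euc d)) (w : Euc d → ℝ) (p : ℝ) : ℝ≥0∞ :=
  (∫⁻ Q, (ntMax Ω w Q) ^ p ∂(sMeasure Ω)) ^ (1 / p)

/-- The `L^p(∂Ω, σ)` norm of a function. -/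
def bLp (Ω : Set (Euc d)) (f : Euc d → ℝ) (p : ℝ) : ℝ≥0∞ :=
  eLpNorm f (ENNReal.ofReal p) (sMeasure Ω)

/-- A test function: smooth with compact support in `ℝ^d`. -/
def TestFun (f : Euc d → ℝ) : Prop := ContDiff ℝ (⊤ : ℕ∞) f ∧ HasCompactSupport f

/-- `u` has boundary data `(D^α f)_{|α| ≤ 1}` in the sense of nontangential convergence
`σ`-a.e. on `∂Ω`. -/
def HasBVals1 (Ω : Set (Euc d)) (u f : Euc d → ℝ) : Prop :=
  ∀ᵐ Q ∂(sMeasure Ω), NTLim Ω u Q (f Q) ∧ ∀ i, NTLim Ω (pder i u) Q (pder i f Q)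

/-- `n` is the (σ-a.e. defined) outward unit normal of `Ω`, characterized by the
Gauss–Green formula. -/
def IsOutwardNormal (Ω : Set (Euc d)) (n : Euc d → Euc d) : Prop :=
  (∀ᵐ Q ∂(sMeasure Ω), ‖n Q‖ = 1) ∧
  ∀ φ : Euc d → Euc d, ContDiff ℝ (⊤ : ℕ∞) φ → HasCompactSupport φ →
    ∫ x in Ω, (∑ i, pder i (fun y => φ y i) x) = ∫ Q, (inner ℝ (φ Q) (n Q) : ℝ) ∂(sMeasure Ω)

/-- `|∇_t h|`, the norm of the tangential gradient `∇h − (∇h·n)n` of `h` on `∂Ω`. -/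
def tgradNorm (n : Euc d → Euc d) (h : Euc d → ℝ) (Q : Euc d) : ℝ :=
  Real.sqrt (∑ i, (pder i h Q - (∑ j, n Q j * pder j h Q) * n Q i) ^ 2)

/-- `|∇_t ∇f|`, the norm of the tangential gradient of the full gradient of `f`. -/
def tgrad2Norm (n : Euc d → Euc d) (f : Euc d → ℝ) (Q : Euc d) : ℝ :=
  Real.sqrt (∑ k, (tgradNorm n (pder k f) Q) ^ 2)

/-- Unique solvability of the `L^q` Dirichlet problem `(D)_q` for `Δ²u = 0` in `Ω`:
existence, with uniform estimate, of solutions with Whitney-array boundary data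
`(D^α f)_{|α|≤1}`, together with uniqueness. -/
def DirichletSolvable (Ω : Set (Euc d)) (q : ℝ) : Prop :=
  (∃ C : ℝ≥0, ∀ f : Euc d → ℝ, TestFun f →
    ∃ u : Euc d → ℝ, Biharmonic Ω u ∧ ntMaxLp Ω (gnorm1 u) q < ⊤ ∧ HasBVals1 Ω u f ∧
      ntMaxLp Ω (gnorm1 u) q + ntMaxLp Ω u q ≤
        C * (bLp Ω f q + ∑ i : Fin d, bLp Ω (pder i f) q)) ∧
  (∀ u : Euc d → ℝ, Biharmonic Ω u → ntMaxLp Ω (gnorm1 u) q < ⊤ →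
    HasBVals1 Ω u (fun _ => 0) → ∀ x ∈ Ω, u x = 0)

/-- Unique solvability of the `L^p` regularity problem `(R)_p` for `Δ²u = 0` in `Ω`:
existence, with uniform estimate, of solutions with Whitney-array boundary data
`(D^α g)_{|α|≤2}`, together with uniqueness. -/
def RegularitySolvable (Ω : Set (Euc d)) (p : ℝ) : Prop :=
  (∃ (n : Euc d → Euc d) (C : ℝ≥0), IsOutwardNormal Ω n ∧
    ∀ g : Euc d → ℝ, TestFun g →
    ∃ u : Euc d → ℝ, Biharmonic Ω u ∧ ntMaxLp Ω (gnorm2 u) p < ⊤ ∧ HasBVals1 Ω u g ∧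
      ntMaxLp Ω (gnorm2 u) p ≤
        C * ((∑ i : Fin d, bLp Ω (tgradNorm n (pder i g)) p) + bLp Ω g p +
          ∑ i : Fin d, bLp Ω (pder i g) p)) ∧
  (∀ u : Euc d → ℝ, Biharmonic Ω u → ntMaxLp Ω (gnorm2 u) p < ⊤ →
    HasBVals1 Ω u (fun _ => 0) → ∀ x ∈ Ω, u x = 0)

/-- `u` is the solution of the `L²` regularity problem in `Ω` with boundary data
`(D^α f)_{|α|≤1}`. -/
def IsL2Sol (Ω : Set (Euc d)) (f u : Euc d → ℝ) : Prop :=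
  Biharmonic Ω u ∧ ntMaxLp Ω (gnorm2 u) 2 < ⊤ ∧ HasBVals1 Ω u f

open Classical in
/-- The solution of the `L²` regularity problem with data `f` (junk value if none exists). -/
def L2Sol (Ω : Set (Euc d)) (f : Euc d → ℝ) : Euc d → ℝ :=
  if h : ∃ u, IsL2Sol Ω f u then h.choose else 0

/-- The bilinear form `Λ[f,g] = −∫_Ω Δu·Δv`, where `u, v` solve the `L²` regularity
problem with data `f, g`. -/
def biForm (Ω : Set (Euc d)) (f g : Euc d → ℝ) : ℝ :=
  - ∫ x in Ω, lap (L2Sol Ω f) x * lap (L2Sol Ω g) x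

/-- The bilinear estimate `|Λ[f,g]| ≤ C (‖∇_t∇f‖_p + ‖∇f‖_p + ‖f‖_p)(‖∇g‖_q + ‖g‖_q)`
for all test functions `f, g`. -/
def BilinearEstimate (Ω : Set (Euc d)) (p q : ℝ) : Prop :=
  ∃ (n : Euc d → Euc d) (C : ℝ≥0), IsOutwardNormal Ω n ∧
    ∀ f g : Euc d → ℝ, TestFun f → TestFun g →
      (‖biForm Ω f g‖₊ : ℝ≥0∞) ≤
        C * (bLp Ω (tgrad2Norm n f) p + bLp Ω (gnorm1 f) p + bLp Ω f p) *
          (bLp Ω (gnorm1 g) q + bLp Ω g q)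

/-- A regular family of truncated nontangential cones for `Ω`: cones of a fixed aperture
and height with vertices at the boundary points. -/
def IsRegularConeFamily (Ω : Set (Euc d)) (γ : Euc d → Set (Euc d)) : Prop :=
  ∃ a : ℝ, 0 < a ∧ ∃ h : ℝ, 0 < h ∧ ∀ Q ∈ frontier Ω,
    γ Q = {x | x ∈ Ω ∧ dist x Q < (1 + a) * Metric.infDist x (frontier Ω) ∧ dist x Q < h}

/-- The square function associated with the cone family `γ`, applied to a function whose
gradient has pointwise norm `g`: `(∫_{γ(Q)} g(x)² |x − Q|^{2−d} dx)^{1/2}`. -/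
def sqFunOf (γ : Euc d → Set (Euc d)) (g : Euc d → ℝ) (Q : Euc d) : ℝ≥0∞ :=
  (∫⁻ x in γ Q, ((‖g x‖₊ : ℝ≥0∞)) ^ 2 * (edist x Q) ^ ((2 : ℝ) - d)) ^ ((1 : ℝ) / 2)

/-!
Write `e` for the vertical unit vector. By the fundamental theorem of calculus each second
derivative of `u` at a point `x` of a cone at `Q` is controlled by its value at `x + h e`, a point
well inside `Ω`, plus the integral over `0 ≤ s ≤ h` of the second derivatives of `D_d u` at
`x + s e`. Since `Ω` is the region above a Lipschitz graph, the distance of `x + s e` to `∂Ω` is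
comparable to `|x - Q| + s`. Interior estimates therefore bound the first term by the supremum of
`|∇u|` over a compact set, and the integrand by averages of `|∇D_d u|` over balls of radius
comparable to `|x - Q| + s`, all contained in a wider cone at `Q`. Integrating these averages in `s`
gives `∫_{|x - Q| ≤ κ |z - Q|} |∇D_d u(z)| |z - Q|^{-d} dz`, a tail operator of Hardy type, which is
bounded on `L²(|z - Q|^{2-d} dz)`. The interior estimates come from a linear combination of the
radial mean value formulas at two scales, in which the `Δu` term cancels.
-/

section PowerIntegrals

variable {E : Type*} [NormedAddCommGroup E] [NormedSpace ℝ E] [FiniteDimensional ℝ E]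
  [MeasurableSpace E] [BorelSpace E] [Nontrivial E] (μ : Measure E) [μ.IsAddHaarMeasure]

theorem lintegral_comp_norm_eq_toSphere_mul {f : ℝ → ℝ≥0∞} (hf : Measurable f) :
    ∫⁻ x, f ‖x‖ ∂μ = μ.toSphere univ *
      ∫⁻ r in Ioi (0 : ℝ), ENNReal.ofReal (r ^ (Module.finrank ℝ E - 1)) * f r := by
  have hf' : Measurable fun r : Ioi (0 : ℝ) => f r := hf.comp measurable_subtype_coe
  calc ∫⁻ x, f ‖x‖ ∂μ = ∫⁻ x : ({0}ᶜ : Set E), f ‖x.1‖ ∂(μ.comap (↑)) := by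
        rw [lintegral_subtype_comap (measurableSet_singleton _).compl fun x => f ‖x‖,
          restrict_compl_singleton]
    _ = ∫⁻ p, f p.2 ∂μ.toSphere.prod (.volumeIoiPow (Module.finrank ℝ E - 1)) := by
        simpa using μ.measurePreserving_homeomorphUnitSphereProd.lintegral_comp
          (hf'.comp measurable_snd)
    _ = μ.toSphere univ * ∫⁻ r : Ioi (0 : ℝ), f r ∂.volumeIoiPow (Module.finrank ℝ E - 1) := by
        rw [← lintegral_map hf' measurable_snd, Measure.map_snd_prod, lintegral_smul_measure,
          smul_eq_mul]
    _ = _ := by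
        rw [Measure.volumeIoiPow, lintegral_withDensity_eq_lintegral_mul _ (by fun_prop) hf',
          ← lintegral_subtype_comap measurableSet_Ioi]
        rfl

theorem setLIntegral_edist_rpow_eq_toSphere_mul (Q : E) {S : Set ℝ} (hS : MeasurableSet S)
    (hpos : S ⊆ Ioi 0) (p : ℝ) :
    ∫⁻ x in {x | dist x Q ∈ S}, edist x Q ^ p ∂μ = μ.toSphere univ *
      ∫⁻ r in S, ENNReal.ofReal (r ^ (p + Module.finrank ℝ E - 1)) := by
  have hfin : 1 ≤ Module.finrank ℝ E := Module.finrank_pos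
  have hmS : MeasurableSet {x : E | dist x Q ∈ S} := (measurable_id.dist measurable_const) hS
  have hradial : ∀ x, {x | dist x Q ∈ S}.indicator (fun x => edist x Q ^ p) x =
      S.indicator (fun r => ENNReal.ofReal r ^ p) ‖x - Q‖ := fun x => by
    rw [← dist_eq_norm, indicator, indicator, edist_dist]; rfl
  have hf : Measurable (S.indicator fun r : ℝ => ENNReal.ofReal r ^ p) :=
    Measurable.indicator (by fun_prop) hS
  rw [← lintegral_indicator hmS, lintegral_congr hradial,
    lintegral_sub_right_eq_self fun x => S.indicator (fun r => ENNReal.ofReal r ^ p) ‖x‖,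
    lintegral_comp_norm_eq_toSphere_mul μ hf]
  congr 1
  calc ∫⁻ r in Ioi (0 : ℝ), ENNReal.ofReal (r ^ (Module.finrank ℝ E - 1)) *
        S.indicator (fun r => ENNReal.ofReal r ^ p) r
      = ∫⁻ r in Ioi (0 : ℝ), S.indicator
          (fun r => ENNReal.ofReal (r ^ (p + Module.finrank ℝ E - 1))) r := by
        refine setLIntegral_congr_fun measurableSet_Ioi fun r (hr : 0 < r) => ?_
        by_cases hrS : r ∈ S
        · rw [indicator_of_mem hrS, indicator_of_mem hrS, ENNReal.ofReal_rpow_of_pos hr,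
            ← ENNReal.ofReal_mul (by positivity), ← Real.rpow_natCast, ← Real.rpow_add hr,
            Nat.cast_sub hfin]
          congr 2; push_cast; ring
        · simp [hrS]
    _ = _ := by rw [setLIntegral_indicator hS, inter_eq_left.2 hpos]

theorem setLIntegral_closedBall_edist_rpow (Q : E) {α R : ℝ} (hα : 0 < α) (hR : 0 ≤ R) :
    ∫⁻ x in closedBall Q R, edist x Q ^ (α - Module.finrank ℝ E) ∂μ =
      μ.toSphere univ / ENNReal.ofReal α * ENNReal.ofReal R ^ α := by
  have hint : IntegrableOn (fun r : ℝ => r ^ (α - 1)) (Ioc 0 R) :=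
    (intervalIntegrable_iff_integrableOn_Ioc_of_le hR).1
      (intervalIntegral.intervalIntegrable_rpow' (by linarith))
  have hpunctured : closedBall Q R =ᵐ[μ] {x | dist x Q ∈ Ioc 0 R} := by
    filter_upwards [compl_mem_ae_iff.2 (measure_singleton (μ := μ) Q)] with x hx
    exact propext ⟨fun h => ⟨dist_pos.2 hx, h⟩, fun h => h.2⟩
  rw [setLIntegral_congr hpunctured,
    setLIntegral_edist_rpow_eq_toSphere_mul μ Q measurableSet_Ioc (fun r hr => hr.1),
    sub_add_cancel, ← ofReal_integral_eq_lintegral_ofReal hint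
      (ae_restrict_of_forall_mem measurableSet_Ioc fun r hr => Real.rpow_nonneg hr.1.le _),
    ← intervalIntegral.integral_of_le hR, integral_rpow (Or.inl (by linarith)), sub_add_cancel,
    Real.zero_rpow hα.ne', sub_zero, ENNReal.ofReal_div_of_pos hα,
    ← ENNReal.ofReal_rpow_of_nonneg hR hα.le]
  simp only [div_eq_mul_inv]
  ring

theorem setLIntegral_compl_ball_edist_rpow (Q : E) {α R : ℝ} (hα : 0 < α) (hR : 0 < R) :
    ∫⁻ x in (ball Q R)ᶜ, edist x Q ^ (-α - Module.finrank ℝ E) ∂μ =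
      μ.toSphere univ / ENNReal.ofReal α * ENNReal.ofReal R ^ (-α) := by
  have hint : IntegrableOn (fun r : ℝ => r ^ (-α - 1)) (Ici R) :=
    (integrableOn_Ici_iff_integrableOn_Ioi (by simp)).2
      (integrableOn_Ioi_rpow_of_lt (by linarith) hR)
  have hcompl : (ball Q R)ᶜ = {x | dist x Q ∈ Ici R} := by ext; simp
  rw [hcompl, setLIntegral_edist_rpow_eq_toSphere_mul μ Q measurableSet_Ici
      (fun r hr => hR.trans_le hr), sub_add_cancel, ← ofReal_integral_eq_lintegral_ofReal hint
      (ae_restrict_of_forall_mem measurableSet_Ici fun r hr =>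
        Real.rpow_nonneg (hR.le.trans hr) _), integral_Ici_eq_integral_Ioi,
    integral_Ioi_rpow_of_lt (by linarith) hR, sub_add_cancel, neg_div_neg_eq,
    ENNReal.ofReal_div_of_pos hα, ← ENNReal.ofReal_rpow_of_pos hR]
  simp only [div_eq_mul_inv]
  ring

end PowerIntegrals

section Hardy

theorem lintegral_mul_sq_le {α : Type*} [MeasurableSpace α] (μ : Measure α) {f g : α → ℝ≥0∞}
    (hf : AEMeasurable f μ) (hg : AEMeasurable g μ) :
    (∫⁻ a, f a * g a ∂μ) ^ 2 ≤ (∫⁻ a, f a ^ 2 ∂μ) * ∫⁻ a, g a ^ 2 ∂μ := by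
  have hsqrt : ∀ a : ℝ≥0∞, (a ^ (1 / 2 : ℝ)) ^ 2 = a := fun a => by
    rw [← ENNReal.rpow_two, ← ENNReal.rpow_mul]; norm_num
  have hölder := ENNReal.lintegral_mul_le_Lp_mul_Lq μ Real.HolderConjugate.two_two hf hg
  simp only [Pi.mul_apply, ENNReal.rpow_two] at hölder
  simpa only [mul_pow, hsqrt] using pow_le_pow_left' hölder 2

variable {E : Type*} [NormedAddCommGroup E] [NormedSpace ℝ E] [MeasurableSpace E]

/-- The tail operator of Hardy type `f ↦ ∫_{|x - Q| ≤ A |z - Q|} f(z) |z - Q|^{-n} dz`, where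
`n` is the dimension of the space. -/
def hardyTail (μ : Measure E) (A : ℝ) (Q : E) (f : E → ℝ≥0∞) (x : E) : ℝ≥0∞ :=
  ∫⁻ z in {z | dist x Q ≤ A * dist z Q}, f z * edist z Q ^ (-(Module.finrank ℝ E : ℝ)) ∂μ

variable [FiniteDimensional ℝ E] [BorelSpace E] [Nontrivial E] (μ : Measure E)
  [μ.IsAddHaarMeasure] {σ A : ℝ} {Q : E} {f : E → ℝ≥0∞}

theorem setLIntegral_dist_le_mul_dist_edist_rpow (hσ : 0 < σ) (hA : 0 < A) {x : E} (hx : x ≠ Q) :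
    ∫⁻ z in {z | dist x Q ≤ A * dist z Q}, edist z Q ^ (-σ - Module.finrank ℝ E) ∂μ =
      μ.toSphere univ / ENNReal.ofReal σ * ENNReal.ofReal A ^ σ * edist x Q ^ (-σ) := by
  have hset : {z | dist x Q ≤ A * dist z Q} = (ball Q (A⁻¹ * dist x Q))ᶜ := by
    ext z
    simp only [mem_ofPred_eq, mem_compl_iff, mem_ball, not_lt]
    rw [inv_mul_le_iff₀ hA]
  rw [hset, setLIntegral_compl_ball_edist_rpow μ Q hσ (by have := dist_pos.2 hx; positivity),
    ENNReal.ofReal_mul (by positivity), ← edist_dist, ENNReal.ofReal_inv_of_pos hA,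
    ENNReal.mul_rpow_of_ne_top (by simpa using hA) (edist_ne_top _ _), ENNReal.inv_rpow,
    ENNReal.rpow_neg _ σ, inv_inv, ENNReal.rpow_neg, mul_assoc]

theorem hardyTail_sq_le (hσ : 0 < σ) (hA : 0 < A) (hf : AEMeasurable f μ) {x : E} (hx : x ≠ Q) :
    hardyTail μ A Q f x ^ 2 ≤
      μ.toSphere univ / ENNReal.ofReal σ * ENNReal.ofReal A ^ σ * edist x Q ^ (-σ) *
        ∫⁻ z in {z | dist x Q ≤ A * dist z Q},
          f z ^ 2 * edist z Q ^ (σ - Module.finrank ℝ E) ∂μ := by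
  set n : ℝ := (Module.finrank ℝ E : ℝ)
  set D : Set E := {z | dist x Q ≤ A * dist z Q}
  have hpow : ∀ p : ℝ, Measurable fun z : E => edist z Q ^ p := fun p => by fun_prop
  have hsplit : hardyTail μ A Q f x = ∫⁻ z in D,
      (f z * edist z Q ^ ((σ - n) / 2)) * edist z Q ^ ((-σ - n) / 2) ∂μ := by
    refine lintegral_congr_ae (ae_restrict_of_ae ?_)
    filter_upwards [compl_mem_ae_iff.2 (measure_singleton (μ := μ) Q)] with z hz
    rw [mul_assoc, ← ENNReal.rpow_add _ _ (edist_pos.2 hz).ne' (edist_ne_top _ _)]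
    congr 2; ring
  have hsq : ∀ (z : E) (p : ℝ), (edist z Q ^ (p / 2)) ^ 2 = edist z Q ^ p := fun z p => by
    rw [← ENNReal.rpow_two, ← ENNReal.rpow_mul, div_mul_cancel₀ p two_ne_zero]
  calc hardyTail μ A Q f x ^ 2
      ≤ (∫⁻ z in D, f z ^ 2 * edist z Q ^ (σ - n) ∂μ) *
          ∫⁻ z in D, edist z Q ^ (-σ - n) ∂μ := by
        simpa only [hsplit, Pi.mul_apply, mul_pow, hsq] using lintegral_mul_sq_le (μ.restrict D)
          (hf.restrict.mul (hpow ((σ - n) / 2)).aemeasurable) (hpow ((-σ - n) / 2)).aemeasurable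
    _ = _ := by rw [setLIntegral_dist_le_mul_dist_edist_rpow μ hσ hA hx, mul_comm]

theorem lintegral_setLIntegral_dist_le_mul_dist (hσ : 0 < σ) (hA : 0 < A) (hf : AEMeasurable f μ) :
    ∫⁻ x, (∫⁻ z in {z | dist x Q ≤ A * dist z Q}, f z ∂μ) *
        edist x Q ^ (σ - Module.finrank ℝ E) ∂μ =
      μ.toSphere univ / ENNReal.ofReal σ * ENNReal.ofReal A ^ σ * ∫⁻ z, f z * edist z Q ^ σ ∂μ := by
  set w : E → ℝ≥0∞ := fun x => edist x Q ^ (σ - Module.finrank ℝ E)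
  set D : Set (E × E) := {p | dist p.1 Q ≤ A * dist p.2 Q}
  have hw : Measurable w := by fun_prop
  have hD : MeasurableSet D := measurableSet_le (by fun_prop) (by fun_prop)
  calc ∫⁻ x, (∫⁻ z in {z | dist x Q ≤ A * dist z Q}, f z ∂μ) * w x ∂μ
      = ∫⁻ x, ∫⁻ z, D.indicator (fun p => f p.2 * w p.1) (x, z) ∂μ ∂μ := by
        refine lintegral_congr fun x => ?_
        rw [← lintegral_mul_const'' _ hf.restrict]
        exact (lintegral_indicator (measurable_prodMk_left (x := x) hD) _).symm
    _ = ∫⁻ z, ∫⁻ x, D.indicator (fun p => f p.2 * w p.1) (x, z) ∂μ ∂μ :=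
        lintegral_lintegral_swap
          (((hf.comp_snd).mul (hw.comp measurable_fst).aemeasurable).indicator hD)
    _ = ∫⁻ z, f z * ∫⁻ x in closedBall Q (A * dist z Q), w x ∂μ ∂μ := by
        refine lintegral_congr fun z => ?_
        rw [← lintegral_const_mul _ hw, ← lintegral_indicator isClosed_closedBall.measurableSet]
        rfl
    _ = ∫⁻ z, μ.toSphere univ / ENNReal.ofReal σ * ENNReal.ofReal A ^ σ *
          (f z * edist z Q ^ σ) ∂μ := by
        refine lintegral_congr fun z => ?_
        rw [setLIntegral_closedBall_edist_rpow μ Q hσ (by positivity), ENNReal.ofReal_mul hA.le,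
          ← edist_dist, ENNReal.mul_rpow_of_nonneg _ _ hσ.le]
        ring
    _ = _ := lintegral_const_mul'' _ (hf.mul (by fun_prop))

-- Schur's test with the power weight `|z - Q|^σ`.
theorem lintegral_hardyTail_sq_mul_le (hσ : 0 < σ) (hA : 0 < A) (hf : AEMeasurable f μ) :
    ∫⁻ x, hardyTail μ A Q f x ^ 2 * edist x Q ^ (2 * σ - Module.finrank ℝ E) ∂μ ≤
      (μ.toSphere univ / ENNReal.ofReal σ * ENNReal.ofReal A ^ σ) ^ 2 *
        ∫⁻ z, f z ^ 2 * edist z Q ^ (2 * σ - Module.finrank ℝ E) ∂μ := by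
  set n : ℝ := (Module.finrank ℝ E : ℝ)
  set K : ℝ≥0∞ := μ.toSphere univ / ENNReal.ofReal σ * ENNReal.ofReal A ^ σ
  have hK : K ≠ ⊤ := ENNReal.mul_ne_top
    (ENNReal.div_ne_top (measure_ne_top _ _) (by simpa using hσ))
    (ENNReal.rpow_ne_top_of_nonneg hσ.le ENNReal.ofReal_ne_top)
  set g : E → ℝ≥0∞ := fun z => f z ^ 2 * edist z Q ^ (σ - n)
  have hg : AEMeasurable g μ := (hf.pow_const 2).mul (by fun_prop)
  have hne : ∀ᵐ x ∂μ, x ≠ Q := compl_mem_ae_iff.2 (measure_singleton Q)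
  have hadd : ∀ x, x ≠ Q → ∀ p q : ℝ, edist x Q ^ p * edist x Q ^ q = edist x Q ^ (p + q) :=
    fun x hx p q => (ENNReal.rpow_add _ _ (edist_pos.2 hx).ne' (edist_ne_top _ _)).symm
  calc ∫⁻ x, hardyTail μ A Q f x ^ 2 * edist x Q ^ (2 * σ - n) ∂μ
      ≤ ∫⁻ x, K * ((∫⁻ z in {z | dist x Q ≤ A * dist z Q}, g z ∂μ) * edist x Q ^ (σ - n)) ∂μ := by
        refine lintegral_mono_ae (hne.mono fun x hx => ?_)
        calc _ ≤ K * edist x Q ^ (-σ) * (∫⁻ z in {z | dist x Q ≤ A * dist z Q}, g z ∂μ) *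
              edist x Q ^ (2 * σ - n) := by gcongr; exact hardyTail_sq_le μ hσ hA hf hx
          _ = K * ((∫⁻ z in {z | dist x Q ≤ A * dist z Q}, g z ∂μ) *
              (edist x Q ^ (-σ) * edist x Q ^ (2 * σ - n))) := by ring
          _ = _ := by rw [hadd x hx]; congr 3; ring
    _ = K * (K * ∫⁻ z, g z * edist z Q ^ σ ∂μ) := by
        rw [lintegral_const_mul' _ _ hK, lintegral_setLIntegral_dist_le_mul_dist μ hσ hA hg]
    _ = K ^ 2 * ∫⁻ z, f z ^ 2 * edist z Q ^ (2 * σ - n) ∂μ := by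
        rw [← mul_assoc, ← sq]
        congr 1
        refine lintegral_congr_ae (hne.mono fun z hz => ?_)
        dsimp only [g]
        rw [mul_assoc, hadd z hz]; congr 2; ring

end Hardy

section PartialDerivatives

variable {u v : Euc d → ℝ} {Ω Ω' : Set (Euc d)} {x : Euc d}

theorem pder_eventuallyEq (h : u =ᶠ[𝓝 x] v) (i : Fin d) : pder i u =ᶠ[𝓝 x] pder i v :=
  (h.fderiv (𝕜 := ℝ)).mono fun _ hy => congrArg (fun L => L (EuclideanSpace.single i 1)) hy

theorem lap_eventuallyEq (h : u =ᶠ[𝓝 x] v) : lap u =ᶠ[𝓝 x] lap v :=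
  (eventually_all.2 fun i => pder_eventuallyEq (pder_eventuallyEq h i) i).mono fun _ hy =>
    Finset.sum_congr rfl fun i _ => hy i

theorem contDiffAt_pder {m n : WithTop ℕ∞} (hu : ContDiffAt ℝ n u x) (hmn : m + 1 ≤ n)
    (i : Fin d) : ContDiffAt ℝ m (pder i u) x :=
  (hu.fderiv_right hmn).clm_apply contDiffAt_const

theorem contDiff_pder {m n : WithTop ℕ∞} (hu : ContDiff ℝ n u) (hmn : m + 1 ≤ n) (i : Fin d) :
    ContDiff ℝ m (pder i u) :=
  contDiff_iff_contDiffAt.2 fun _ => contDiffAt_pder hu.contDiffAt hmn i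

theorem contDiffAt_lap {m n : WithTop ℕ∞} (hu : ContDiffAt ℝ n u x) (hmn : m + 1 + 1 ≤ n) :
    ContDiffAt ℝ m (lap u) x :=
  ContDiffAt.sum fun i _ => contDiffAt_pder (contDiffAt_pder hu hmn i) le_rfl i

theorem contDiff_lap {m n : WithTop ℕ∞} (hu : ContDiff ℝ n u) (hmn : m + 1 + 1 ≤ n) :
    ContDiff ℝ m (lap u) :=
  contDiff_iff_contDiffAt.2 fun _ => contDiffAt_lap hu.contDiffAt hmn

theorem pder_pder_eq_fderiv_fderiv (hu : ContDiffAt ℝ 2 u x) (i j : Fin d) :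
    pder i (pder j u) x =
      fderiv ℝ (fderiv ℝ u) x (EuclideanSpace.single i 1) (EuclideanSpace.single j 1) := by
  have hd : DifferentiableAt ℝ (fderiv ℝ u) x :=
    (hu.fderiv_right (m := 1) (by norm_num)).differentiableAt one_ne_zero
  change fderiv ℝ (fun y => fderiv ℝ u y (EuclideanSpace.single j 1)) x _ = _
  rw [fderiv_clm_apply hd (differentiableAt_const _)]
  simp

theorem pder_comm (hu : ContDiffAt ℝ 2 u x) (i j : Fin d) :
    pder i (pder j u) x = pder j (pder i u) x := by
  rw [pder_pder_eq_fderiv_fderiv hu, pder_pder_eq_fderiv_fderiv hu]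
  exact hu.isSymmSndFDerivAt (by simp) _ _

theorem pder_lap (hu : ContDiffAt ℝ 3 u x) (k : Fin d) : pder k (lap u) x = lap (pder k u) x := by
  have hpder : ∀ i, ContDiffAt ℝ 2 (pder i u) x := fun i => contDiffAt_pder hu (by norm_num) i
  have hcomm : ∀ i, pder k (pder i u) =ᶠ[𝓝 x] pder i (pder k u) := fun i =>
    (hu.eventually (by simp)).mono fun y hy => pder_comm (hy.of_le (by norm_num)) k i
  calc pder k (lap u) x = ∑ i, pder k (pder i (pder i u)) x := by
        change fderiv ℝ (fun y => ∑ i, pder i (pder i u) y) x _ = _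
        rw [fderiv_fun_sum fun i _ =>
          (contDiffAt_pder (m := 1) (hpder i) (by norm_num) i).differentiableAt one_ne_zero,
          sum_apply]
        rfl
    _ = lap (pder k u) x := Finset.sum_congr rfl fun i _ => by
        rw [pder_comm (hpder i), (pder_eventuallyEq (hcomm i) i).eq_of_nhds]

theorem Biharmonic.mono (hu : Biharmonic Ω u) (h : Ω' ⊆ Ω) : Biharmonic Ω' u :=
  ⟨hu.1.mono h, fun x hx => hu.2 x (h hx)⟩

theorem Biharmonic.contDiffAt (hu : Biharmonic Ω u) (hΩ : IsOpen Ω) (hx : x ∈ Ω) {n : ℕ} :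
    ContDiffAt ℝ n u x :=
  (hu.1.contDiffAt (hΩ.mem_nhds hx)).of_le (by exact_mod_cast le_top)

theorem bilap_pder (hu : ContDiffAt ℝ 5 u x) (k : Fin d) :
    bilap (pder k u) x = pder k (bilap u) x := by
  have hlap : lap (pder k u) =ᶠ[𝓝 x] pder k (lap u) :=
    (hu.eventually (by simp)).mono fun y hy => (pder_lap (hy.of_le (by norm_num)) k).symm
  rw [bilap, (lap_eventuallyEq hlap).eq_of_nhds, bilap,
    pder_lap (contDiffAt_lap hu (by norm_num)) k]

theorem Biharmonic.pder (hu : Biharmonic Ω u) (hΩ : IsOpen Ω) (k : Fin d) :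
    Biharmonic Ω (pder k u) := by
  refine ⟨(hu.1.fderiv_of_isOpen hΩ (by simp)).clm_apply contDiffOn_const, fun x hx => ?_⟩
  have hzero : bilap u =ᶠ[𝓝 x] fun _ => 0 := eventually_of_mem (hΩ.mem_nhds hx) hu.2
  rw [bilap_pder (hu.contDiffAt hΩ hx (n := 5)), (pder_eventuallyEq hzero k).eq_of_nhds]
  simp [_root_.pder]

theorem fderiv_apply_eq_sum_mul_pder (u : Euc d → ℝ) (x y : Euc d) :
    fderiv ℝ u x y = ∑ i, y i * pder i u x := by
  conv_lhs => rw [← (EuclideanSpace.basisFun (Fin d) ℝ).sum_repr y]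
  simp [pder]

end PartialDerivatives

section RadialKernel

variable {E : Type*} [NormedAddCommGroup E]

/-- The radial kernel `(1 - ‖y‖²)₊ ^ (n + 1)`, supported in the closed unit ball. With this
normalization of the exponent the gradient of the `(n + 1)`-st kernel is a multiple of `y` times
the `n`-th one. -/
def radialKernel (n : ℕ) (y : E) : ℝ := max (1 - ‖y‖ ^ 2) 0 ^ (n + 1)

theorem radialKernel_nonneg (n : ℕ) (y : E) : 0 ≤ radialKernel n y := by
  unfold radialKernel; positivity

theorem radialKernel_le_one (n : ℕ) (y : E) : radialKernel n y ≤ 1 :=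
  pow_le_one₀ (le_max_right _ _) (max_le (by nlinarith [norm_nonneg y]) zero_le_one)

theorem radialKernel_eq_zero {n : ℕ} {y : E} (hy : 1 ≤ ‖y‖) : radialKernel n y = 0 := by
  rw [radialKernel, max_eq_right (by nlinarith), zero_pow n.succ_ne_zero]

theorem continuous_radialKernel (n : ℕ) : Continuous (radialKernel n : E → ℝ) := by
  unfold radialKernel; fun_prop

theorem hasCompactSupport_radialKernel [ProperSpace E] (n : ℕ) :
    HasCompactSupport (radialKernel n : E → ℝ) :=
  HasCompactSupport.intro (isCompact_closedBall 0 1) fun _ hy =>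
    radialKernel_eq_zero (by simpa using (not_le.1 (by simpa using hy)).le)

theorem integrable_radialKernel_mul [ProperSpace E] [MeasurableSpace E] [BorelSpace E]
    {μ : Measure E} [IsFiniteMeasureOnCompacts μ] (n : ℕ) {g : E → ℝ} (hg : Continuous g) :
    Integrable (fun y => radialKernel n y * g y) μ :=
  ((continuous_radialKernel n).mul hg).integrable_of_hasCompactSupport
    (hasCompactSupport_radialKernel n).mul_right

theorem integral_radialKernel_pos [ProperSpace E] [MeasurableSpace E] [BorelSpace E]
    (μ : Measure E) [IsFiniteMeasureOnCompacts μ] [μ.IsOpenPosMeasure] (n : ℕ) :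
    0 < ∫ y : E, radialKernel n y ∂μ :=
  (continuous_radialKernel n).integral_pos_of_hasCompactSupport_nonneg_nonzero
    (hasCompactSupport_radialKernel n) (radialKernel_nonneg n) (x := 0) (by simp [radialKernel])

theorem hasDerivAt_max_zero_pow (n : ℕ) (r : ℝ) :
    HasDerivAt (fun r : ℝ => max r 0 ^ (n + 2)) ((n + 2) * max r 0 ^ (n + 1)) r := by
  refine hasDerivAt_of_hasDerivAt_of_ne' (x := 0) (g := fun r => (n + 2) * max r 0 ^ (n + 1))
    (fun r hr => ?_) (by fun_prop) (by fun_prop) r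
  rcases hr.lt_or_gt with hneg | hpos
  · refine ((hasDerivAt_const r (0 : ℝ)).congr_of_eventuallyEq ?_).congr_deriv ?_
    · filter_upwards [gt_mem_nhds hneg] with s hs using by simp [max_eq_right hs.le]
    · simp [max_eq_right hneg.le]
  · refine ((hasDerivAt_pow (n + 2) r).congr_of_eventuallyEq ?_).congr_deriv ?_
    · filter_upwards [lt_mem_nhds hpos] with s hs using by simp [max_eq_left hs.le]
    · simp [max_eq_left hpos.le]

theorem hasFDerivAt_radialKernel_succ [InnerProductSpace ℝ E] (n : ℕ) (y : E) :
    HasFDerivAt (radialKernel (n + 1))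
      ((-(2 * (n + 2)) * radialKernel n y) • innerSL ℝ y) y := by
  have hnorm : HasFDerivAt (fun y : E => 1 - ‖y‖ ^ 2) (-(2 • innerSL ℝ y)) y :=
    (hasStrictFDerivAt_norm_sq y).hasFDerivAt.const_sub 1
  refine ((hasDerivAt_max_zero_pow n (1 - ‖y‖ ^ 2)).comp_hasFDerivAt y hnorm).congr_fderiv ?_
  ext z
  simp [radialKernel]
  ring

theorem pder_radialKernel_succ (n : ℕ) (y : Euc d) (i : Fin d) :
    pder i (radialKernel (n + 1)) y = -(2 * (n + 2)) * (radialKernel n y * y i) := by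
  rw [pder, (hasFDerivAt_radialKernel_succ n y).fderiv]
  simp [EuclideanSpace.inner_single_right]
  ring

end RadialKernel

section RadialMean

variable {u v w : Euc d → ℝ} {x : Euc d} {s t : ℝ}

/-- The mean of `u` at scale `t` about `x`, weighted by (and not normalized by the mass of) the
`n`-th radial kernel. -/
def radialMean (n : ℕ) (u : Euc d → ℝ) (x : Euc d) (t : ℝ) : ℝ :=
  ∫ y, radialKernel n y * u (x + t • y)

theorem radialMean_zero (n : ℕ) (u : Euc d → ℝ) (x : Euc d) :
    radialMean n u x 0 = (∫ y : Euc d, radialKernel n y) * u x := by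
  simp [radialMean, integral_mul_const]

theorem add_smul_mem_ball {E : Type*} [NormedAddCommGroup E] [NormedSpace ℝ E] (x : E) {y : E}
    (hy : ‖y‖ < 1) {s t : ℝ} (ht : 0 < t) (hst : |s| ≤ t) : x + s • y ∈ ball x t := by
  rw [mem_ball, dist_eq_norm, add_sub_cancel_left, norm_smul, Real.norm_eq_abs]
  nlinarith [norm_nonneg y]

theorem pder_comp_add_smul (hu : Differentiable ℝ u) (x : Euc d) (t : ℝ) (i : Fin d) (y : Euc d) :
    pder i (fun y => u (x + t • y)) y = t * pder i u (x + t • y) := by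
  have hchain : HasFDerivAt (fun y => u (x + t • y))
      ((fderiv ℝ u (x + t • y)).comp (t • ContinuousLinearMap.id ℝ (Euc d))) y :=
    (hu _).hasFDerivAt.comp y (((hasFDerivAt_id y).const_smul t).const_add x)
  simp [pder, hchain.fderiv]

theorem mul_radialMean_pder (hu : ContDiff ℝ 1 u) (n : ℕ) (x : Euc d) (t : ℝ) (i : Fin d) :
    t * radialMean (n + 1) (pder i u) x t =
      2 * (n + 2) * ∫ y, radialKernel n y * (y i * u (x + t • y)) := by
  have hdiff : Differentiable ℝ u := hu.differentiable one_ne_zero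
  have hu_cont : Continuous fun y => u (x + t • y) := hu.continuous.comp (by fun_prop)
  have hpder_cont : Continuous fun y => pder i u (x + t • y) :=
    (contDiff_pder hu (m := 0) (by norm_num) i).continuous.comp (by fun_prop)
  have hcoord_cont : Continuous fun y => y i * u (x + t • y) :=
    (by fun_prop : Continuous fun y : Euc d => y i).mul hu_cont
  have hparts := integral_mul_fderiv_eq_neg_fderiv_mul_of_integrable
    (μ := (volume : Measure (Euc d))) (f := radialKernel (n + 1)) (g := fun y => u (x + t • y))
    (v := EuclideanSpace.single i 1)
    (((integrable_radialKernel_mul n hcoord_cont).const_mul (-(2 * (n + 2) : ℝ))).congr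
      (Eventually.of_forall fun y => by
        change _ = pder i (radialKernel (n + 1)) y * _
        rw [pder_radialKernel_succ]; ring))
    ((integrable_radialKernel_mul (n + 1) (hpder_cont.const_mul t)).congr
      (Eventually.of_forall fun y => congrArg _ (pder_comp_add_smul hdiff x t i y).symm))
    (integrable_radialKernel_mul (n + 1) hu_cont)
    (fun y _ => (hasFDerivAt_radialKernel_succ n y).differentiableAt)
    (fun y _ => (hdiff _).comp y (by fun_prop))
  calc t * radialMean (n + 1) (pder i u) x t
      = ∫ y, radialKernel (n + 1) y * pder i (fun y => u (x + t • y)) y := by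
        rw [radialMean, ← integral_const_mul]
        refine integral_congr_ae (Eventually.of_forall fun y => ?_)
        dsimp only
        rw [pder_comp_add_smul hdiff]; ring
    _ = -∫ y, pder i (radialKernel (n + 1)) y * u (x + t • y) := hparts
    _ = _ := by
        rw [← integral_neg, ← integral_const_mul]
        refine integral_congr_ae (Eventually.of_forall fun y => ?_)
        dsimp only
        rw [pder_radialKernel_succ]; ring

theorem hasDerivAt_radialMean_integral_fderiv (hu : ContDiff ℝ 1 u) (n : ℕ) (x : Euc d) (t : ℝ) :
    HasDerivAt (radialMean n u x) (∫ y, radialKernel n y * fderiv ℝ u (x + t • y) y) t := by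
  have hfderiv : Continuous (fderiv ℝ u) := hu.continuous_fderiv one_ne_zero
  have hu_cont : ∀ s : ℝ, Continuous fun y : Euc d => u (x + s • y) := fun s =>
    hu.continuous.comp (by fun_prop)
  obtain ⟨C, hC⟩ := (isCompact_closedBall x (|t| + 1)).exists_bound_of_continuousOn
    hfderiv.continuousOn
  have hbound : ∀ y : Euc d, ∀ s ∈ ball t 1,
      ‖radialKernel n y * fderiv ℝ u (x + s • y) y‖ ≤ radialKernel n y * C := fun y s hs => by
    rcases le_or_gt 1 ‖y‖ with hy | hy
    · simp [radialKernel_eq_zero hy]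
    have hst : |s| ≤ |t| + 1 := by
      have : |s - t| < 1 := by simpa [Real.dist_eq] using hs
      linarith [abs_sub_abs_le_abs_sub s t]
    rw [norm_mul, Real.norm_of_nonneg (radialKernel_nonneg n y)]
    refine mul_le_mul_of_nonneg_left ?_ (radialKernel_nonneg n y)
    calc ‖fderiv ℝ u (x + s • y) y‖ ≤ ‖fderiv ℝ u (x + s • y)‖ * ‖y‖ :=
          ContinuousLinearMap.le_opNorm _ _
      _ ≤ ‖fderiv ℝ u (x + s • y)‖ := mul_le_of_le_one_right (norm_nonneg _) hy.le
      _ ≤ C := hC _ (ball_subset_closedBall (add_smul_mem_ball x hy (by positivity) hst))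
  refine (hasDerivAt_integral_of_dominated_loc_of_deriv_le (μ := (volume : Measure (Euc d)))
    (F := fun t y => radialKernel n y * u (x + t • y)) (ball_mem_nhds t one_pos)
    (Eventually.of_forall fun s => (integrable_radialKernel_mul n (hu_cont s)).aestronglyMeasurable)
    (integrable_radialKernel_mul n (hu_cont t))
    (integrable_radialKernel_mul n
      ((hfderiv.comp (by fun_prop)).clm_apply continuous_id)).aestronglyMeasurable
    (Eventually.of_forall hbound) (integrable_radialKernel_mul n continuous_const)
    (Eventually.of_forall fun y s _ => ?_)).2
  have hline : HasDerivAt (fun s : ℝ => x + s • y) y s := by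
    simpa using ((hasDerivAt_id s).smul_const y).const_add x
  exact ((hu.differentiable one_ne_zero _).hasFDerivAt.comp_hasDerivAt s hline).const_mul _

theorem hasDerivAt_radialMean (hu : ContDiff ℝ 2 u) (n : ℕ) (x : Euc d) (t : ℝ) :
    HasDerivAt (radialMean n u x) (t / (2 * (n + 2)) * radialMean (n + 1) (lap u) x t) t := by
  have hpder : ∀ i, ContDiff ℝ 1 (pder i u) := contDiff_pder hu (by norm_num)
  have hpder_cont : ∀ i, Continuous fun y => pder i u (x + t • y) := fun i =>
    (hpder i).continuous.comp (by fun_prop)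
  have hpder₂_cont : ∀ i, Continuous fun y => pder i (pder i u) (x + t • y) := fun i =>
    (contDiff_pder (m := 0) (hpder i) (by norm_num) i).continuous.comp (by fun_prop)
  have hcoord_cont : ∀ i, Continuous fun y => y i * pder i u (x + t • y) := fun i =>
    (by fun_prop : Continuous fun y : Euc d => y i).mul (hpder_cont i)
  have hlap : radialMean (n + 1) (lap u) x t =
      ∑ i, radialMean (n + 1) (pder i (pder i u)) x t := by
    simp only [radialMean, lap, Finset.mul_sum]
    exact integral_finsetSum _ fun i _ => integrable_radialKernel_mul (n + 1) (hpder₂_cont i)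
  have hn : (n : ℝ) + 2 ≠ 0 := by positivity
  refine (hasDerivAt_radialMean_integral_fderiv (hu.of_le (by norm_num)) n x t).congr_deriv ?_
  simp only [fderiv_apply_eq_sum_mul_pder, Finset.mul_sum]
  rw [integral_finsetSum _ fun i _ =>
    integrable_radialKernel_mul n (hcoord_cont i), hlap, Finset.mul_sum]
  refine Finset.sum_congr rfl fun i _ => ?_
  rw [div_mul_eq_mul_div, mul_radialMean_pder (hpder i)]
  field_simp

theorem radialMean_eq_zero (n : ℕ) (hs : |s| ≤ t) (ht : 0 < t) (hw : ∀ z ∈ ball x t, w z = 0) :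
    radialMean n w x s = 0 := by
  refine integral_eq_zero_of_ae (Eventually.of_forall fun y => ?_)
  rcases le_or_gt 1 ‖y‖ with hy | hy
  · simp [radialKernel_eq_zero hy]
  · simp [hw _ (add_smul_mem_ball x hy ht hs)]

theorem radialMean_eq_radialMean_zero (hw : ContDiff ℝ 2 w) (n : ℕ) (ht : 0 < t)
    (hharm : ∀ z ∈ ball x t, lap w z = 0) (hs : s ∈ Icc 0 t) :
    radialMean n w x s = radialMean n w x 0 := by
  refine constant_of_has_deriv_right_zero
    (fun r _ => (hasDerivAt_radialMean hw n x r).continuousAt.continuousWithinAt)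
    (fun r hr => ?_) s hs
  have hderiv := hasDerivAt_radialMean hw n x r
  rw [radialMean_eq_zero (n + 1) (abs_le.2 ⟨by linarith [hr.1], hr.2.le⟩) ht hharm,
    mul_zero] at hderiv
  exact hderiv.hasDerivWithinAt

theorem radialMean_eq_add_sq_mul (hv : ContDiff ℝ 4 v) (n : ℕ) (ht : 0 < t)
    (hbiharm : ∀ z ∈ ball x t, bilap v z = 0) (hs : s ∈ Icc 0 t) :
    radialMean n v x s = radialMean n v x 0 +
      s ^ 2 * (radialMean (n + 1) (lap v) x 0 / (4 * (n + 2))) := by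
  set c : ℝ := radialMean (n + 1) (lap v) x 0 / (4 * (n + 2))
  have hderiv : ∀ r, HasDerivAt (fun r => radialMean n v x r - r ^ 2 * c)
      (r / (2 * (n + 2)) * radialMean (n + 1) (lap v) x r - 2 * r * c) r := fun r =>
    (hasDerivAt_radialMean (hv.of_le (by norm_num)) n x r).sub
      (by simpa using (hasDerivAt_pow 2 r).mul_const c)
  have hconst := constant_of_has_deriv_right_zero
    (fun r _ => (hderiv r).continuousAt.continuousWithinAt)
    (fun r (hr : r ∈ Ico 0 t) => ((hderiv r).congr_deriv ?_).hasDerivWithinAt) s hs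
  · simp only [zero_pow two_ne_zero, zero_mul, sub_zero] at hconst
    linarith
  · rw [radialMean_eq_radialMean_zero (contDiff_lap hv (by norm_num)) (n + 1) ht hbiharm
      (Ico_subset_Icc_self hr)]
    have hn : (n : ℝ) + 2 ≠ 0 := by positivity
    simp only [c]
    field_simp
    ring

theorem four_mul_radialMean_half_sub (hv : ContDiff ℝ 4 v) (n : ℕ) (ht : 0 < t)
    (hbiharm : ∀ z ∈ ball x t, bilap v z = 0) :
    4 * radialMean n v x (t / 2) - radialMean n v x t =
      3 * (∫ y : Euc d, radialKernel n y) * v x := by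
  rw [radialMean_eq_add_sq_mul hv n ht hbiharm (s := t) ⟨ht.le, le_rfl⟩,
    radialMean_eq_add_sq_mul hv n ht hbiharm (s := t / 2) ⟨by positivity, by linarith⟩,
    radialMean_zero]
  ring

end RadialMean

section InteriorEstimate

theorem lintegral_comp_add_smul {E : Type*} [NormedAddCommGroup E] [NormedSpace ℝ E]
    [FiniteDimensional ℝ E] [MeasurableSpace E] [BorelSpace E] (μ : Measure E)
    [μ.IsAddHaarMeasure] {f : E → ℝ≥0∞} (hf : Measurable f) (x : E) {s : ℝ} (hs : 0 < s) :
    ∫⁻ y, f (x + s • y) ∂μ = (∫⁻ z, f z ∂μ) / ENNReal.ofReal s ^ Module.finrank ℝ E := by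
  rw [← lintegral_map (f := fun w => f (x + w)) (by fun_prop) (measurable_const_smul s),
    Measure.map_addHaar_smul _ hs.ne', lintegral_smul_measure, lintegral_add_left_eq_self,
    abs_of_pos (by positivity), ENNReal.ofReal_inv_of_pos (by positivity),
    ENNReal.ofReal_pow hs.le, smul_eq_mul, mul_comm, div_eq_mul_inv]

theorem exists_contDiff_eqOn_ball {E F : Type*} [NormedAddCommGroup E] [NormedSpace ℝ E]
    [FiniteDimensional ℝ E] [HasContDiffBump E] [NormedAddCommGroup F] [NormedSpace ℝ F]
    {f : E → F} {x : E} {r R : ℝ} {n : ℕ∞} (hr : 0 < r) (hrR : r < R)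
    (hf : ContDiffOn ℝ n f (ball x R)) :
    ∃ g : E → F, ContDiff ℝ n g ∧ EqOn g f (ball x r) := by
  let χ : ContDiffBump x := ⟨r, (r + R) / 2, hr, by linarith⟩
  refine ⟨fun z => χ z • f z, contDiff_iff_contDiffAt.2 fun z => ?_, fun z hz => ?_⟩
  · by_cases hz : z ∈ ball x R
    · exact χ.contDiffAt.smul (hf.contDiffAt (isOpen_ball.mem_nhds hz))
    have hsupp : z ∉ tsupport χ := fun h => hz <| by
      rw [χ.tsupport_eq] at h
      exact closedBall_subset_ball (show (r + R) / 2 < R by linarith) h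
    refine (contDiffAt_const (c := (0 : F))).congr_of_eventuallyEq ?_
    filter_upwards [notMem_tsupport_iff_eventuallyEq.1 hsupp] with w hw
    simp [hw]
  · simp [χ.one_of_mem_closedBall (ball_subset_closedBall hz)]

variable {u : Euc d → ℝ}

theorem enorm_integral_radialKernel_mul_coord_le (hu : Continuous u) (n : ℕ) (x : Euc d) {s : ℝ}
    (hs : 0 < s) (i : Fin d) :
    ‖∫ y, radialKernel n y * (y i * u (x + s • y))‖ₑ ≤
      (∫⁻ z in ball x s, ‖u z‖ₑ) / ENNReal.ofReal s ^ d := by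
  have hmeas : Measurable ((ball x s).indicator fun z => ‖u z‖ₑ) :=
    hu.measurable.enorm.indicator measurableSet_ball
  have hscale := lintegral_comp_add_smul volume hmeas x hs
  rw [finrank_euclideanSpace_fin, lintegral_indicator measurableSet_ball] at hscale
  rw [← hscale]
  refine (enorm_integral_le_lintegral_enorm _).trans (lintegral_mono fun y => ?_)
  rcases le_or_gt 1 ‖y‖ with hy | hy
  · simp [radialKernel_eq_zero hy]
  · have hweight : ‖radialKernel n y * y i‖ₑ ≤ 1 := by
      rw [← ofReal_norm, ENNReal.ofReal_le_one, norm_mul,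
        Real.norm_of_nonneg (radialKernel_nonneg n y)]
      exact mul_le_one₀ (radialKernel_le_one n y) (norm_nonneg _)
        ((PiLp.norm_apply_le y i).trans hy.le)
    rw [indicator_of_mem (add_smul_mem_ball x hy hs (abs_of_pos hs).le), ← mul_assoc, enorm_mul]
    exact mul_le_of_le_one_left' hweight

theorem enorm_radialMean_pder_le (hu : ContDiff ℝ 1 u) (n : ℕ) (x : Euc d) {s : ℝ} (hs : 0 < s)
    (i : Fin d) :
    ‖radialMean (n + 1) (pder i u) x s‖ₑ ≤
      2 * (n + 2) * ((∫⁻ z in ball x s, ‖u z‖ₑ) / ENNReal.ofReal s ^ (d + 1)) := by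
  have hparts : radialMean (n + 1) (pder i u) x s =
      s⁻¹ * (2 * (n + 2) * ∫ y, radialKernel n y * (y i * u (x + s • y))) := by
    rw [← mul_radialMean_pder hu n x s i, inv_mul_cancel_left₀ hs.ne']
  have hconst : ‖(2 * (n + 2) : ℝ)‖ₑ = 2 * (n + 2) := by
    rw [Real.enorm_of_nonneg (by positivity)]
    exact_mod_cast ENNReal.ofReal_natCast (2 * (n + 2))
  rw [hparts, enorm_mul, enorm_mul, hconst, Real.enorm_of_nonneg (by positivity),
    ENNReal.ofReal_inv_of_pos hs]
  calc (ENNReal.ofReal s)⁻¹ *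
        (2 * (n + 2) * ‖∫ y, radialKernel n y * (y i * u (x + s • y))‖ₑ)
      ≤ (ENNReal.ofReal s)⁻¹ *
        (2 * (n + 2) * ((∫⁻ z in ball x s, ‖u z‖ₑ) / ENNReal.ofReal s ^ d)) := by
        gcongr
        exact enorm_integral_radialKernel_mul_coord_le hu.continuous n x hs i
    _ = _ := by
        rw [pow_succ, div_eq_mul_inv, div_eq_mul_inv,
          ENNReal.mul_inv (Or.inr ENNReal.ofReal_ne_top) (Or.inr (by simpa using hs))]
        ring

theorem setLIntegral_ball_half_div_le {X : Type*} [PseudoMetricSpace X] [MeasurableSpace X]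
    (μ : Measure X) (f : X → ℝ≥0∞) (x : X) {t : ℝ} (ht : 0 < t) (k : ℕ) :
    (∫⁻ z in ball x (t / 2), f z ∂μ) / ENNReal.ofReal (t / 2) ^ k ≤
      2 ^ k * ((∫⁻ z in ball x t, f z ∂μ) / ENNReal.ofReal t ^ k) := by
  calc (∫⁻ z in ball x (t / 2), f z ∂μ) / ENNReal.ofReal (t / 2) ^ k
      ≤ (∫⁻ z in ball x t, f z ∂μ) / ENNReal.ofReal (t / 2) ^ k := by
        gcongr
        exact half_le_self ht.le
    _ = _ := by
        rw [ENNReal.ofReal_div_of_pos two_pos, ENNReal.ofReal_ofNat, ENNReal.div_eq_inv_mul,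
          ENNReal.inv_pow, ENNReal.inv_div (by simp) (by simp), div_eq_mul_inv, mul_pow,
          mul_assoc, ← ENNReal.inv_pow, ← ENNReal.div_eq_inv_mul]

theorem exists_enorm_pder_le_of_contDiff (d : ℕ) :
    ∃ C : ℝ≥0, ∀ (u : Euc d → ℝ) (x : Euc d) (t : ℝ), ContDiff ℝ (⊤ : ℕ∞) u → 0 < t →
      Biharmonic (ball x t) u → ∀ i,
      ‖pder i u x‖ₑ ≤ C * ((∫⁻ z in ball x t, ‖u z‖ₑ) / ENNReal.ofReal t ^ (d + 1)) := by
  set m : ℝ := ∫ y : Euc d, radialKernel 1 y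
  have hm : 0 < 3 * m := mul_pos three_pos (integral_radialKernel_pos volume 1)
  refine ⟨(16 * 2 ^ (d + 1) + 4) / (3 * m).toNNReal, fun u x t hu ht hbiharm i => ?_⟩
  have hu₁ : ContDiff ℝ 1 u := hu.of_le (by exact_mod_cast le_top)
  have hu₅ : ContDiff ℝ 5 u := contDiff_infty.1 hu 5
  set M : ℝ → ℝ := radialMean 1 (pder i u) x
  set A : ℝ≥0∞ := (∫⁻ z in ball x t, ‖u z‖ₑ) / ENNReal.ofReal t ^ (d + 1)
  have hmean : 4 * M (t / 2) - M t = 3 * m * pder i u x :=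
    four_mul_radialMean_half_sub (contDiff_pder hu₅ (by norm_num) i) 1 ht
      (hbiharm.pder isOpen_ball i).2
  have hM : ∀ s, 0 < s → ‖M s‖ₑ ≤
      4 * ((∫⁻ z in ball x s, ‖u z‖ₑ) / ENNReal.ofReal s ^ (d + 1)) := fun s hs => by
    have hM := enorm_radialMean_pder_le hu₁ 0 x hs i
    norm_num at hM
    exact hM
  have hM_half : ‖M (t / 2)‖ₑ ≤ 4 * (2 ^ (d + 1) * A) :=
    (hM _ (half_pos ht)).trans
      (mul_le_mul_right (setLIntegral_ball_half_div_le volume _ x ht (d + 1)) 4)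
  have hsum : ENNReal.ofReal (3 * m) * ‖pder i u x‖ₑ ≤ (16 * 2 ^ (d + 1) + 4) * A := by
    calc ENNReal.ofReal (3 * m) * ‖pder i u x‖ₑ = ‖4 * M (t / 2) - M t‖ₑ := by
          rw [hmean, enorm_mul, Real.enorm_of_nonneg hm.le]
      _ ≤ ‖(4 : ℝ)‖ₑ * ‖M (t / 2)‖ₑ + ‖M t‖ₑ := by
          rw [← enorm_mul]; exact enorm_sub_le
      _ ≤ 4 * (4 * (2 ^ (d + 1) * A)) + 4 * A := by
          gcongr
          · simp [Real.enorm_eq_ofReal_abs]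
          · exact hM t ht
      _ = _ := by ring
  have hm' : ENNReal.ofReal (3 * m) ≠ 0 := by simpa using hm
  rw [ENNReal.coe_div (by simpa using hm), ← ENNReal.mul_div_right_comm,
    show ((3 * m).toNNReal : ℝ≥0∞) = ENNReal.ofReal (3 * m) from rfl,
    ENNReal.le_div_iff_mul_le (Or.inl hm') (Or.inl ENNReal.ofReal_ne_top), mul_comm]
  exact_mod_cast hsum

theorem exists_enorm_pder_le_of_biharmonic (d : ℕ) :
    ∃ C : ℝ≥0, ∀ (u : Euc d → ℝ) (x : Euc d) (t : ℝ), 0 < t → Biharmonic (ball x (2 * t)) u →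
      ∀ i, ‖pder i u x‖ₑ ≤ C * ((∫⁻ z in ball x t, ‖u z‖ₑ) / ENNReal.ofReal t ^ (d + 1)) := by
  obtain ⟨C, hC⟩ := exists_enorm_pder_le_of_contDiff d
  refine ⟨C, fun u x t ht hu i => ?_⟩
  obtain ⟨g, hg, hgu⟩ := exists_contDiff_eqOn_ball ht (by linarith : t < 2 * t) hu.1
  have hnhds : ∀ z ∈ ball x t, g =ᶠ[𝓝 z] u := fun z hz =>
    hgu.eventuallyEq_of_mem (isOpen_ball.mem_nhds hz)
  have hg_biharm : Biharmonic (ball x t) g := ⟨hg.contDiffOn, fun z hz => by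
    rw [bilap, (lap_eventuallyEq (lap_eventuallyEq (hnhds z hz))).eq_of_nhds]
    exact hu.2 z (ball_subset_ball (by linarith) hz)⟩
  have hbound := hC g x t hg ht hg_biharm i
  rwa [(pder_eventuallyEq (hnhds x (mem_ball_self ht)) i).eq_of_nhds,
    setLIntegral_congr_fun measurableSet_ball fun z hz => by rw [hgu hz]] at hbound

theorem exists_enorm_pder_le_div_mul_iSup (d : ℕ) :
    ∃ C : ℝ≥0, ∀ (u : Euc d → ℝ) (x : Euc d) (t : ℝ), 0 < t → Biharmonic (ball x (2 * t)) u →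
      ∀ i, ‖pder i u x‖ₑ ≤ C / ENNReal.ofReal t * ⨆ z ∈ ball x t, ‖u z‖ₑ := by
  obtain ⟨C, hC⟩ := exists_enorm_pder_le_of_biharmonic d
  have hfin : volume (ball (0 : Euc d) 1) ≠ ⊤ := measure_ball_lt_top.ne
  refine ⟨C * (volume (ball (0 : Euc d) 1)).toNNReal, fun u x t ht hu i =>
    (hC u x t ht hu i).trans ?_⟩
  set S : ℝ≥0∞ := ⨆ z ∈ ball x t, ‖u z‖ₑ
  have hT : ENNReal.ofReal t ≠ 0 := by simpa using ht
  have hint : ∫⁻ z in ball x t, ‖u z‖ₑ ≤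
      S * (ENNReal.ofReal t ^ d * volume (ball (0 : Euc d) 1)) := by
    calc ∫⁻ z in ball x t, ‖u z‖ₑ ≤ ∫⁻ _ in ball x t, S :=
          setLIntegral_mono measurable_const fun z hz => le_biSup (fun z => ‖u z‖ₑ) hz
      _ = S * volume (ball x t) := setLIntegral_const _ _
      _ = _ := by
          rw [Measure.addHaar_ball_of_pos _ _ ht, finrank_euclideanSpace_fin,
            ENNReal.ofReal_pow ht.le]
  calc C * ((∫⁻ z in ball x t, ‖u z‖ₑ) / ENNReal.ofReal t ^ (d + 1))
      ≤ C * (S * (ENNReal.ofReal t ^ d * volume (ball (0 : Euc d) 1)) /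
        ENNReal.ofReal t ^ (d + 1)) := by gcongr
    _ = C * (S * (volume (ball (0 : Euc d) 1) * (ENNReal.ofReal t)⁻¹)) := by
        rw [pow_succ, mul_div_assoc, ENNReal.mul_div_mul_left _ _ (pow_ne_zero d hT)
          (by finiteness), div_eq_mul_inv]
    _ = _ := by
        rw [ENNReal.coe_mul, ENNReal.coe_toNNReal hfin, div_eq_mul_inv]
        ring

end InteriorEstimate

section TruncatedCone

/-- The cone `{x ∈ Ω : |x - Q| < b dist(x, ∂Ω), |x - Q| < h}` with vertex `Q`, of aperture `b - 1`
in the convention of `IsRegularConeFamily` and height `h`. -/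
def truncatedCone (Ω : Set (Euc d)) (b h : ℝ) (Q : Euc d) : Set (Euc d) :=
  {x | x ∈ Ω ∧ dist x Q < b * infDist x (frontier Ω) ∧ dist x Q < h}

theorem isRegularConeFamily_truncatedCone (Ω : Set (Euc d)) {b h : ℝ} (hb : 1 < b) (hh : 0 < h) :
    IsRegularConeFamily Ω (truncatedCone Ω b h) :=
  ⟨b - 1, sub_pos.2 hb, h, hh, fun Q _ => by rw [add_sub_cancel, truncatedCone]⟩

theorem measurableSet_truncatedCone {Ω : Set (Euc d)} (hΩ : MeasurableSet Ω) (b h : ℝ)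
    (Q : Euc d) : MeasurableSet (truncatedCone Ω b h Q) :=
  have hdist : Measurable fun x => dist x Q := by fun_prop
  hΩ.inter ((measurableSet_lt hdist (measurable_infDist.const_mul b)).inter
    (measurableSet_lt hdist measurable_const))

theorem ball_infDist_frontier_subset {E : Type*} [NormedAddCommGroup E] [NormedSpace ℝ E]
    {s : Set E} (hs : IsOpen s) {x : E} (hx : x ∈ s) :
    ball x (infDist x (frontier s)) ⊆ s := by
  rcases le_or_gt (infDist x (frontier s)) 0 with hdist | hdist
  · simp [ball_eq_empty.2 hdist]
  refine (convex_ball x _).isPreconnected.subset_left_of_subset_union hs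
    isClosed_closure.isOpen_compl (disjoint_compl_right.mono_left subset_closure)
    (fun y hy => ?_) ⟨x, mem_ball_self hdist, hx⟩
  by_contra hys
  rw [mem_union, mem_compl_iff, not_or, not_not] at hys
  have hy_frontier : y ∈ frontier s := hs.frontier_eq ▸ ⟨hys.2, hys.1⟩
  exact (mem_ball'.1 hy).not_ge (infDist_le_dist_of_mem hy_frontier)

theorem le_infDist_frontier_of_ball_subset {X : Type*} [PseudoMetricSpace X] {s : Set X}
    (hs : IsOpen s) (hne : (frontier s).Nonempty) {x : X} {t : ℝ} (h : ball x t ⊆ s) :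
    t ≤ infDist x (frontier s) :=
  (le_infDist hne).2 fun y hy => by
    by_contra! hxy
    exact (hs.frontier_eq ▸ hy).2 (h (mem_ball'.2 hxy))

theorem mem_truncatedCone_of_mem_ball {Ω : Set (Euc d)} (hΩ : IsOpen Ω) {Q y z : Euc d} {κ τ h : ℝ}
    (hQ : Q ∈ frontier Ω) (hκ : 0 ≤ κ) (hy : dist y Q ≤ κ * τ) (hball : ball y (2 * τ) ⊆ Ω)
    (hh : (κ + 1) * τ ≤ h) (hz : z ∈ ball y τ) : z ∈ truncatedCone Ω (κ + 1) h Q := by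
  have hz_dist : dist z Q < (κ + 1) * τ := by
    linarith [dist_triangle z y Q, mem_ball.1 hz]
  have hz_ball : ball z τ ⊆ Ω :=
    (ball_subset_ball' (by linarith [mem_ball.1 hz])).trans hball
  have hz_infDist : τ ≤ infDist z (frontier Ω) :=
    le_infDist_frontier_of_ball_subset hΩ ⟨Q, hQ⟩ hz_ball
  refine ⟨hball (ball_subset_ball (by linarith [pos_of_mem_ball hz]) hz),
    hz_dist.trans_le ?_, hz_dist.trans_le hh⟩
  gcongr

end TruncatedCone

section GraphDomain

theorem pdLast_eq_pder (hd : 0 < d) (u : Euc d → ℝ) :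
    pdLast u = pder ⟨d - 1, Nat.sub_lt hd one_pos⟩ u := by
  funext x; simp [pdLast, pder, vertDir, hd]

theorem norm_vertDir (hd : 0 < d) : ‖vertDir d‖ = 1 := by
  simp [vertDir, hd]

theorem dist_add_smul_vertDir (hd : 0 < d) (x : Euc d) (s : ℝ) :
    dist (x + s • vertDir d) x = |s| := by
  rw [dist_eq_norm, add_sub_cancel_left, norm_smul, norm_vertDir hd, mul_one, Real.norm_eq_abs]

theorem vertCoord_add_smul_vertDir (hd : 0 < d) (x : Euc d) (s : ℝ) :
    vertCoord d (x + s • vertDir d) = vertCoord d x + s := by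
  simp [vertCoord, vertDir, hd]

theorem graphCoord_add_smul_vertDir (x : Euc d) (s : ℝ) :
    graphCoord d (x + s • vertDir d) = graphCoord d x := by
  ext i
  have hd : 0 < d := i.pos.trans_le (Nat.sub_le d 1)
  have hne : Fin.castLE (Nat.sub_le d 1) i ≠ ⟨d - 1, Nat.sub_lt hd one_pos⟩ :=
    Fin.ne_of_lt i.isLt
  simp [graphCoord, vertDir, hd, hne]

theorem abs_vertCoord_sub_le (x y : Euc d) : |vertCoord d x - vertCoord d y| ≤ dist x y := by
  by_cases hd : 0 < d
  · simpa [vertCoord, hd, dist_eq_norm] using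
      PiLp.norm_apply_le (x - y) ⟨d - 1, Nat.sub_lt hd one_pos⟩
  · simp [vertCoord, hd]

theorem lipschitzWith_graphCoord : LipschitzWith 1 (graphCoord d) := by
  refine LipschitzWith.mk_one fun x y => ?_
  rw [EuclideanSpace.dist_eq, EuclideanSpace.dist_eq]
  refine Real.sqrt_le_sqrt ?_
  calc ∑ i, dist (graphCoord d x i) (graphCoord d y i) ^ 2
      = ∑ j ∈ Finset.univ.map (Fin.castLEEmb (Nat.sub_le d 1)), dist (x j) (y j) ^ 2 := by
        rw [Finset.sum_map]; rfl
    _ ≤ ∑ j, dist (x j) (y j) ^ 2 := Finset.sum_le_univ_sum_of_nonneg fun j => sq_nonneg _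

theorem lt_vertCoord_of_mem_ball {η : Euc (d - 1) → ℝ} {M : ℝ≥0} (hη : LipschitzWith M η)
    {y z : Euc d} {t : ℝ} (hy : η (graphCoord d y) + (1 + M) * t ≤ vertCoord d y)
    (hz : z ∈ ball y t) : η (graphCoord d z) < vertCoord d z := by
  have hvert := (abs_le.1 (abs_vertCoord_sub_le z y)).1
  have hgraph : |η (graphCoord d z) - η (graphCoord d y)| ≤ M * dist z y := by
    simpa [Real.dist_eq] using (hη.comp lipschitzWith_graphCoord).dist_le_mul z y
  nlinarith [(abs_le.1 hgraph).2, mem_ball.1 hz, M.coe_nonneg]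

variable {Ω : Set (Euc d)} {P Q x : Euc d} {R h b : ℝ} {η : Euc (d - 1) → ℝ} {M : ℝ≥0}

theorem add_dist_div_le_vertCoord (hd : 0 < d) (hΩ : IsOpen Ω) (hb : 1 ≤ b)
    (hgraph : ∀ x ∈ ball P (R + 4 * h), x ∈ Ω ↔ η (graphCoord d x) < vertCoord d x)
    (hQ : Q ∈ ball P R) (hx : x ∈ truncatedCone Ω b h Q) :
    η (graphCoord d x) + dist x Q / b ≤ vertCoord d x := by
  obtain ⟨hxΩ, hx_dist, hxh⟩ := hx
  set δ : ℝ := dist x Q / b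
  have hδ : 0 ≤ δ := by positivity
  have hδx : δ ≤ dist x Q := div_le_self dist_nonneg hb
  have hδ_dist : dist (x + (-δ) • vertDir d) x = δ := by
    rw [dist_add_smul_vertDir hd, abs_neg, abs_of_nonneg hδ]
  have hδΩ : x + (-δ) • vertDir d ∈ Ω := by
    refine ball_infDist_frontier_subset hΩ hxΩ ?_
    rw [mem_ball, hδ_dist, div_lt_iff₀ (by linarith), mul_comm]
    exact hx_dist
  have hδP : x + (-δ) • vertDir d ∈ ball P (R + 4 * h) := by
    rw [mem_ball]
    linarith [dist_triangle4 (x + (-δ) • vertDir d) x Q P, mem_ball.1 hQ,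
      dist_nonneg (x := x) (y := Q)]
  have habove := (hgraph _ hδP).1 hδΩ
  rw [graphCoord_add_smul_vertDir, vertCoord_add_smul_vertDir hd] at habove
  linarith

theorem ball_add_smul_vertDir_subset (hd : 0 < d) (hΩ : IsOpen Ω) (hb : 1 ≤ b)
    (hη : LipschitzWith M η)
    (hgraph : ∀ x ∈ ball P (R + 4 * h), x ∈ Ω ↔ η (graphCoord d x) < vertCoord d x)
    (hQ : Q ∈ ball P R) (hx : x ∈ truncatedCone Ω b h Q) {s : ℝ} (hs : s ∈ Icc 0 h) :
    ball (x + s • vertDir d) ((dist x Q + s) / (b * (1 + M))) ⊆ Ω := by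
  set t : ℝ := (dist x Q + s) / (b * (1 + M))
  have hbM : 1 ≤ b * (1 + M) := one_le_mul_of_one_le_of_one_le hb (by simp)
  have ht : t ≤ dist x Q + s := div_le_self (add_nonneg dist_nonneg hs.1) hbM
  have hcenter : η (graphCoord d (x + s • vertDir d)) + (1 + M) * t ≤
      vertCoord d (x + s • vertDir d) := by
    rw [graphCoord_add_smul_vertDir, vertCoord_add_smul_vertDir hd]
    have ht_eq : (1 + M) * t = dist x Q / b + s / b := by
      rw [← add_div, mul_div_assoc', mul_comm b, mul_div_mul_left _ _ (by positivity)]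
    linarith [add_dist_div_le_vertCoord hd hΩ hb hgraph hQ hx, div_le_self hs.1 hb]
  intro z hz
  refine (hgraph z ?_).2 (lt_vertCoord_of_mem_ball hη hcenter hz)
  have hs_dist : dist (x + s • vertDir d) x = s := by
    rw [dist_add_smul_vertDir hd, abs_of_nonneg hs.1]
  rw [mem_ball] at hz hQ ⊢
  linarith [dist_triangle4 z (x + s • vertDir d) x P, dist_triangle x Q P, hs.2, hx.2.2]

end GraphDomain

section VerticalIntegration

theorem enorm_le_add_lintegral_fderiv_apply {E F : Type*} [NormedAddCommGroup E] [NormedSpace ℝ E]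
    [NormedAddCommGroup F] [NormedSpace ℝ F] {f : E → F} {x e : E} {h : ℝ} (hh : 0 ≤ h)
    (hf : ∀ s ∈ Icc 0 h, ContDiffAt ℝ 1 f (x + s • e)) :
    ‖f x‖ₑ ≤ ‖f (x + h • e)‖ₑ + ∫⁻ s in Icc 0 h, ‖fderiv ℝ f (x + s • e) e‖ₑ := by
  have hline : ContDiff ℝ 1 fun s : ℝ => x + s • e := by fun_prop
  have hderiv : ∀ s ∈ Icc 0 h,
      deriv (fun s : ℝ => f (x + s • e)) s = fderiv ℝ f (x + s • e) e := fun s hs => by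
    have hline_deriv : HasDerivAt (fun s : ℝ => x + s • e) e s := by
      simpa using ((hasDerivAt_id s).smul_const e).const_add x
    exact (((hf s hs).differentiableAt one_ne_zero).hasFDerivAt.comp_hasDerivAt s
      hline_deriv).deriv
  have hftc : ‖f (x + h • e) - f x‖ₑ ≤ ∫⁻ s in Icc 0 h, ‖fderiv ℝ f (x + s • e) e‖ₑ := by
    calc ‖f (x + h • e) - f x‖ₑ ≤ ∫⁻ s in Icc 0 h, ‖deriv (fun s : ℝ => f (x + s • e)) s‖ₑ := by
          simpa using enorm_sub_le_lintegral_deriv_of_contDiffOn_Icc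
            (f := fun s : ℝ => f (x + s • e))
            (fun s hs => ((hf s hs).comp s hline.contDiffAt).contDiffWithinAt) hh
      _ = _ := setLIntegral_congr_fun measurableSet_Icc fun s hs => by rw [hderiv s hs]
  calc ‖f x‖ₑ = ‖f (x + h • e) - (f (x + h • e) - f x)‖ₑ := by rw [sub_sub_cancel]
    _ ≤ _ := enorm_sub_le.trans (by gcongr)

theorem lintegral_Ioi_setLIntegral_le {α : Type*} [MeasurableSpace α] (μ : Measure α)
    {g : α → ℝ≥0∞} {φ : α → ℝ} (hg : AEMeasurable g μ) (hφ : Measurable φ) :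
    ∫⁻ s in Ioi (0 : ℝ), ∫⁻ z in {z | s ≤ φ z}, g z ∂μ =
      ∫⁻ z, g z * ENNReal.ofReal (φ z) ∂μ := by
  calc ∫⁻ s in Ioi (0 : ℝ), ∫⁻ z in {z | s ≤ φ z}, g z ∂μ
      = ∫⁻ s in Ioi (0 : ℝ), μ.withDensity g {z | s ≤ max (φ z) 0} := by
        refine setLIntegral_congr_fun measurableSet_Ioi fun s hs => ?_
        simp only [le_max_iff, not_le.2 (mem_Ioi.1 hs), or_false]
        exact (withDensity_apply g (measurableSet_le measurable_const hφ)).symm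
    _ = ∫⁻ z, ENNReal.ofReal (max (φ z) 0) ∂μ.withDensity g :=
        (lintegral_eq_lintegral_meas_le _ (.of_forall fun _ => le_max_right _ _)
          (hφ.max measurable_const).aemeasurable).symm
    _ = _ := by
        rw [lintegral_withDensity_eq_lintegral_mul₀ hg (by fun_prop)]
        simp only [Pi.mul_apply, ENNReal.ofReal_max, ENNReal.ofReal_zero, max_zero]

theorem lintegral_Ioi_setLIntegral_dist_add_le_mul_dist_le {E : Type*} [NormedAddCommGroup E]
    [NormedSpace ℝ E] [MeasurableSpace E] [BorelSpace E] (μ : Measure E)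
    {f : E → ℝ≥0∞} (hf : AEMeasurable f μ) (A : ℝ) (Q x : E) :
    ∫⁻ s in Ioi (0 : ℝ), ∫⁻ z in {z | dist x Q + s ≤ A * dist z Q},
        f z * edist z Q ^ (-(Module.finrank ℝ E + 1 : ℝ)) ∂μ ≤
      ENNReal.ofReal A * hardyTail μ A Q f x := by
  set n : ℝ := (Module.finrank ℝ E : ℝ)
  have hpow : ∀ z, edist z Q ^ (-(n + 1)) * edist z Q ≤ edist z Q ^ (-n) := fun z => by
    rcases eq_or_ne z Q with rfl | hz
    · simp
    · nth_rw 2 [← ENNReal.rpow_one (edist z Q)]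
      rw [← ENNReal.rpow_add _ _ (edist_pos.2 hz).ne' (edist_ne_top _ _), neg_add,
        neg_add_cancel_right]
  have hg : AEMeasurable (fun z => f z * edist z Q ^ (-(n + 1))) μ := hf.mul (by fun_prop)
  have hset : MeasurableSet {z | dist x Q ≤ A * dist z Q} :=
    measurableSet_le (by fun_prop) (by fun_prop)
  simp only [← le_sub_iff_add_le']
  rw [lintegral_Ioi_setLIntegral_le μ hg (by fun_prop), hardyTail,
    ← lintegral_const_mul' _ _ ENNReal.ofReal_ne_top, ← lintegral_indicator hset]
  refine lintegral_mono fun z => ?_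
  by_cases hz : dist x Q ≤ A * dist z Q
  · rw [indicator_of_mem (by exact hz)]
    calc f z * edist z Q ^ (-(n + 1)) * ENNReal.ofReal (A * dist z Q - dist x Q)
        ≤ f z * edist z Q ^ (-(n + 1)) * ENNReal.ofReal (A * dist z Q) := by
          gcongr; exact sub_le_self _ dist_nonneg
      _ = ENNReal.ofReal A * (f z * (edist z Q ^ (-(n + 1)) * edist z Q)) := by
          rw [ENNReal.ofReal_mul' dist_nonneg, ← edist_dist]; ring
      _ ≤ _ := by gcongr; exact hpow z
  · simp [ENNReal.ofReal_of_nonpos (sub_nonpos.2 (le_of_not_ge hz))]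

theorem exists_enorm_pder_le_setLIntegral (d : ℕ) {κ : ℝ} (hκ : 0 < κ) :
    ∃ C : ℝ≥0, ∀ (v : Euc d → ℝ) (Q y : Euc d) (τ : ℝ), 0 < τ → dist y Q ≤ κ * τ →
      Biharmonic (ball y (2 * τ)) v → ∀ i,
      ‖pder i v y‖ₑ ≤ C * ∫⁻ z in ball y τ, ‖v z‖ₑ * edist z Q ^ (-(d + 1 : ℝ)) := by
  obtain ⟨C, hC⟩ := exists_enorm_pder_le_of_biharmonic d
  refine ⟨C * (κ + 1).toNNReal ^ (d + 1), fun v Q y τ hτ hyQ hv i => (hC v y τ hτ hv i).trans ?_⟩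
  have hT : ENNReal.ofReal τ ≠ 0 := by simpa using hτ
  have hweight : ∀ z ∈ ball y τ, (ENNReal.ofReal τ ^ (d + 1))⁻¹ ≤
      ENNReal.ofReal (κ + 1) ^ (d + 1) * edist z Q ^ (-(d + 1 : ℝ)) := fun z hz => by
    have hz_dist : edist z Q ≤ ENNReal.ofReal τ * ENNReal.ofReal (κ + 1) := by
      rw [edist_dist, ← ENNReal.ofReal_mul hτ.le]
      exact ENNReal.ofReal_le_ofReal (by linarith [dist_triangle z y Q, mem_ball.1 hz])
    have hinv : (ENNReal.ofReal τ)⁻¹ ≤ ENNReal.ofReal (κ + 1) * (edist z Q)⁻¹ := by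
      rw [← div_eq_mul_inv, ENNReal.le_div_iff_mul_le (Or.inr (by simpa using by positivity))
        (Or.inl (edist_ne_top z Q)), ENNReal.inv_mul_le_iff hT ENNReal.ofReal_ne_top]
      exact hz_dist
    rw [ENNReal.rpow_neg, ← Nat.cast_add_one, ENNReal.rpow_natCast, ENNReal.inv_pow,
      ENNReal.inv_pow, ← mul_pow]
    gcongr
  calc C * ((∫⁻ z in ball y τ, ‖v z‖ₑ) / ENNReal.ofReal τ ^ (d + 1))
      = C * ∫⁻ z in ball y τ, ‖v z‖ₑ * (ENNReal.ofReal τ ^ (d + 1))⁻¹ := by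
        rw [lintegral_mul_const' _ _ (ENNReal.inv_ne_top.2 (pow_ne_zero _ hT)), div_eq_mul_inv]
    _ ≤ C * ∫⁻ z in ball y τ,
          ENNReal.ofReal (κ + 1) ^ (d + 1) * (‖v z‖ₑ * edist z Q ^ (-(d + 1 : ℝ))) := by
        refine mul_le_mul_right (setLIntegral_mono' measurableSet_ball fun z hz => ?_) _
        rw [mul_left_comm]
        exact mul_le_mul_right (hweight z hz) _
    _ = _ := by
        rw [lintegral_const_mul' _ _ (by finiteness), ENNReal.coe_mul, ENNReal.coe_pow, mul_assoc]
        rfl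

theorem exists_enorm_pder_le_setLIntegral_le_dist (d : ℕ) {κ : ℝ} (hκ : 0 < κ) :
    ∃ C : ℝ≥0, ∀ (v : Euc d → ℝ) (Q y : Euc d) (τ : ℝ) (f : Euc d → ℝ≥0∞), 0 < τ →
      dist y Q ≤ κ * τ → Q ∉ ball y (2 * τ) → Biharmonic (ball y (2 * τ)) v →
      (∀ z ∈ ball y τ, ‖v z‖ₑ ≤ f z) → ∀ i,
      ‖pder i v y‖ₑ ≤ C * ∫⁻ z in {z | τ ≤ dist z Q}, f z * edist z Q ^ (-(d + 1 : ℝ)) := by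
  obtain ⟨C, hC⟩ := exists_enorm_pder_le_setLIntegral d hκ
  refine ⟨C, fun v Q y τ f hτ hyQ hQ hv hvf i => ?_⟩
  have hfar : ball y τ ⊆ {z | τ ≤ dist z Q} := fun z hz => by
    have hQ_dist : 2 * τ ≤ dist Q y := not_lt.1 fun hlt => hQ hlt
    rw [mem_ofPred_eq]
    linarith [dist_triangle_left Q y z, mem_ball.1 hz]
  calc ‖pder i v y‖ₑ ≤ C * ∫⁻ z in ball y τ, ‖v z‖ₑ * edist z Q ^ (-(d + 1 : ℝ)) :=
        hC v Q y τ hτ hyQ hv i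
    _ ≤ C * ∫⁻ z in ball y τ, f z * edist z Q ^ (-(d + 1 : ℝ)) :=
        mul_le_mul_right (setLIntegral_mono' measurableSet_ball fun z hz =>
          mul_le_mul_left (hvf z hz) _) _
    _ ≤ _ := by gcongr

theorem exists_lintegral_enorm_pder_le_hardyTail (d : ℕ) {κ : ℝ} (hκ : 0 < κ) :
    ∃ C : ℝ≥0, ∀ (Ω : Set (Euc d)) (v : Euc d → ℝ) (Q x e : Euc d) (h : ℝ) (f : Euc d → ℝ≥0∞),
      Q ∉ Ω → x ∈ Ω → ‖e‖ = 1 → AEMeasurable f → Biharmonic Ω v →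
      (∀ s ∈ Icc 0 h, ball (x + s • e) (2 * ((dist x Q + s) / κ)) ⊆ Ω) →
      (∀ s ∈ Icc 0 h, ∀ z ∈ ball (x + s • e) ((dist x Q + s) / κ), ‖v z‖ₑ ≤ f z) → ∀ i,
      ∫⁻ s in Icc 0 h, ‖pder i v (x + s • e)‖ₑ ≤ C * hardyTail volume κ Q f x := by
  obtain ⟨C, hC⟩ := exists_enorm_pder_le_setLIntegral_le_dist d hκ
  refine ⟨C * κ.toNNReal, fun Ω v Q x e h f hQ hx he hf hv hball hvf i => ?_⟩
  set ρ : ℝ := dist x Q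
  have hρ : 0 < ρ := dist_pos.2 fun hxQ => hQ (hxQ ▸ hx)
  set w : Euc d → ℝ≥0∞ := fun z => edist z Q ^ (-(d + 1 : ℝ))
  have hpt : ∀ s ∈ Icc 0 h, ‖pder i v (x + s • e)‖ₑ ≤
      C * ∫⁻ z in {z | ρ + s ≤ κ * dist z Q}, f z * w z := fun s hs => by
    have hs_dist : dist (x + s • e) x = s := by
      simp [dist_eq_norm, norm_smul, he, abs_of_nonneg hs.1]
    have hyQ : dist (x + s • e) Q ≤ κ * ((ρ + s) / κ) := by
      rw [mul_div_cancel₀ _ hκ.ne']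
      linarith [dist_triangle (x + s • e) x Q]
    simpa only [div_le_iff₀' hκ] using hC v Q _ _ f
      (div_pos (add_pos_of_pos_of_nonneg hρ hs.1) hκ) hyQ (fun hQ_mem => hQ (hball s hs hQ_mem))
      (hv.mono (hball s hs)) (hvf s hs) i
  calc ∫⁻ s in Icc 0 h, ‖pder i v (x + s • e)‖ₑ
      ≤ ∫⁻ s in Icc 0 h, C * ∫⁻ z in {z | ρ + s ≤ κ * dist z Q}, f z * w z :=
        setLIntegral_mono' measurableSet_Icc hpt
    _ ≤ ∫⁻ s in Ioi 0, C * ∫⁻ z in {z | ρ + s ≤ κ * dist z Q}, f z * w z :=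
        (setLIntegral_congr Ioc_ae_eq_Icc).symm.trans_le (lintegral_mono_set Ioc_subset_Ioi_self)
    _ ≤ C * (ENNReal.ofReal κ * hardyTail volume κ Q f x) := by
        rw [lintegral_const_mul' _ _ ENNReal.coe_ne_top]
        gcongr
        simpa only [finrank_euclideanSpace_fin] using
          lintegral_Ioi_setLIntegral_dist_add_le_mul_dist_le volume hf κ Q x
    _ = _ := by rw [ENNReal.coe_mul, mul_assoc]; rfl

end VerticalIntegration

section GradientNorms

theorem enorm_pder_le_gnorm1 (u : Euc d → ℝ) (j : Fin d) (x : Euc d) :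
    ‖pder j u x‖ₑ ≤ ‖gnorm1 u x‖ₑ := by
  rw [enorm_le_iff_norm_le, gnorm1, Real.norm_eq_abs, Real.norm_of_nonneg (Real.sqrt_nonneg _)]
  exact Real.abs_le_sqrt (Finset.single_le_sum (f := fun i => pder i u x ^ 2)
    (fun i _ => sq_nonneg _) (Finset.mem_univ j))

theorem enorm_gnorm2_le {u : Euc d → ℝ} {x : Euc d} {B : ℝ≥0∞}
    (hB : ∀ i j, ‖pder i (pder j u) x‖ₑ ≤ B) : ‖gnorm2 u x‖ₑ ≤ d * B := by
  refine (ENNReal.pow_le_pow_left_iff two_ne_zero).1 ?_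
  calc ‖gnorm2 u x‖ₑ ^ 2 = ‖∑ i, ∑ j, pder i (pder j u) x ^ 2‖ₑ := by
        rw [← enorm_pow, gnorm2, Real.sq_sqrt (by positivity)]
    _ ≤ ∑ i, ∑ j, ‖pder i (pder j u) x ^ 2‖ₑ :=
        (enorm_sum_le _ _).trans (Finset.sum_le_sum fun i _ => enorm_sum_le _ _)
    _ ≤ ∑ _i : Fin d, ∑ _j : Fin d, B ^ 2 := by
        gcongr with i _ j
        rw [enorm_pow]
        gcongr
        exact hB i j
    _ = (d * B) ^ 2 := by simp; ring

theorem measurable_gnorm1 (u : Euc d → ℝ) : Measurable (gnorm1 u) :=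
  (Finset.measurable_sum _ fun _ _ => (measurable_fderiv_apply_const ℝ u _).pow_const 2).sqrt

theorem pdLast_pder_pder (hd : 0 < d) {u : Euc d → ℝ} {x : Euc d} (hu : ContDiffAt ℝ 3 u x)
    (i j : Fin d) : pdLast (pder i (pder j u)) x = pder i (pder j (pdLast u)) x := by
  simp only [pdLast_eq_pder hd]
  rw [pder_comm (contDiffAt_pder hu (by norm_num) j)]
  refine (pder_eventuallyEq ((hu.eventually (by simp)).mono fun y hy => ?_) i).eq_of_nhds
  exact pder_comm (hy.of_le (by norm_num)) _ _

theorem enorm_pder_pder_le_add_lintegral (hd : 0 < d) {u : Euc d → ℝ} {x : Euc d} {h : ℝ}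
    (hh : 0 ≤ h) (hu : ∀ s ∈ Icc 0 h, ContDiffAt ℝ 3 u (x + s • vertDir d)) (i j : Fin d) :
    ‖pder i (pder j u) x‖ₑ ≤ ‖pder i (pder j u) (x + h • vertDir d)‖ₑ +
      ∫⁻ s in Icc 0 h, ‖pder i (pder j (pdLast u)) (x + s • vertDir d)‖ₑ := by
  rw [← setLIntegral_congr_fun measurableSet_Icc fun s hs => by
    rw [← pdLast_pder_pder hd (hu s hs) i j]]
  exact enorm_le_add_lintegral_fderiv_apply hh fun s hs =>
    contDiffAt_pder (contDiffAt_pder (hu s hs) (m := 2) (by norm_num) j) (by norm_num) i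

theorem exists_enorm_pder_pder_le_div_mul_iSup_gnorm1 (d : ℕ) :
    ∃ C : ℝ≥0, ∀ (u : Euc d → ℝ) (x : Euc d) (t : ℝ), 0 < t → Biharmonic (ball x (2 * t)) u →
      ∀ i j, ‖pder i (pder j u) x‖ₑ ≤ C / ENNReal.ofReal t * ⨆ z ∈ ball x t, ‖gnorm1 u z‖ₑ := by
  obtain ⟨C, hC⟩ := exists_enorm_pder_le_div_mul_iSup d
  refine ⟨C, fun u x t ht hu i j => (hC _ x t ht (hu.pder isOpen_ball j) i).trans ?_⟩
  gcongr
  exact enorm_pder_le_gnorm1 u j _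

theorem ball_add_smul_vertDir_subset_truncatedCone (hd : 0 < d) {Ω : Set (Euc d)} (hΩ : IsOpen Ω)
    {Q x : Euc d} {κ h s : ℝ} (hQ : Q ∈ frontier Ω) (hκ : 2 ≤ κ) (hx : dist x Q ≤ h)
    (hs : s ∈ Icc 0 h) (hball : ball (x + s • vertDir d) (2 * ((dist x Q + s) / κ)) ⊆ Ω) :
    ball (x + s • vertDir d) ((dist x Q + s) / κ) ⊆ truncatedCone Ω (κ + 1) (3 * h) Q := by
  have hκ₀ : 0 < κ := two_pos.trans_le hκ
  have hs_dist : dist (x + s • vertDir d) x = s := by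
    rw [dist_add_smul_vertDir hd, abs_of_nonneg hs.1]
  refine fun z hz => mem_truncatedCone_of_mem_ball hΩ hQ hκ₀.le ?_ hball ?_ hz
  · rw [mul_div_cancel₀ _ hκ₀.ne']
    linarith [dist_triangle (x + s • vertDir d) x Q]
  · rw [mul_div_assoc', div_le_iff₀ hκ₀]
    calc (κ + 1) * (dist x Q + s) ≤ (κ + 1) * (h + h) := by gcongr; exact hs.2
      _ ≤ 3 * h * κ := by nlinarith [hs.1.trans hs.2]

theorem exists_lintegral_enorm_pder_pder_pdLast_le (hd : 0 < d) {κ : ℝ} (hκ : 2 ≤ κ) :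
    ∃ C : ℝ≥0, ∀ (Ω : Set (Euc d)) (u : Euc d → ℝ) (Q x : Euc d) (h : ℝ), IsOpen Ω →
      Biharmonic Ω u → Q ∈ frontier Ω → x ∈ Ω → dist x Q ≤ h →
      (∀ s ∈ Icc 0 h, ball (x + s • vertDir d) (2 * ((dist x Q + s) / κ)) ⊆ Ω) → ∀ i j,
      ∫⁻ s in Icc 0 h, ‖pder i (pder j (pdLast u)) (x + s • vertDir d)‖ₑ ≤
        C * hardyTail volume κ Q
          ((truncatedCone Ω (κ + 1) (3 * h) Q).indicator fun z => ‖gnorm1 (pdLast u) z‖ₑ) x := by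
  obtain ⟨C, hC⟩ := exists_lintegral_enorm_pder_le_hardyTail d (two_pos.trans_le hκ)
  refine ⟨C, fun Ω u Q x h hΩ hu hQ hx hxQ hball i j => ?_⟩
  have hcone_meas := measurableSet_truncatedCone hΩ.measurableSet (κ + 1) (3 * h) Q
  have hbiharmonic : Biharmonic Ω (pder j (pdLast u)) := by
    rw [pdLast_eq_pder hd]
    exact (hu.pder hΩ _).pder hΩ j
  refine hC Ω _ Q x (vertDir d) h _ (hΩ.frontier_eq ▸ hQ).2 hx (norm_vertDir hd)
    ((measurable_gnorm1 _).enorm.indicator hcone_meas).aemeasurable hbiharmonic hball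
    (fun s hs z hz => ?_) i
  rw [indicator_of_mem
    (ball_add_smul_vertDir_subset_truncatedCone hd hΩ hQ hκ hxQ hs (hball s hs) hz)]
  exact enorm_pder_le_gnorm1 _ j z

theorem exists_enorm_gnorm2_le (hd : 0 < d) {κ h : ℝ} (hκ : 2 ≤ κ) (hh : 0 < h) :
    ∃ B : ℝ≥0, ∀ (Ω : Set (Euc d)) (u : Euc d → ℝ) (Q x : Euc d), IsOpen Ω → Biharmonic Ω u →
      Q ∈ frontier Ω → x ∈ Ω → dist x Q ≤ h →
      (∀ s ∈ Icc 0 h, ball (x + s • vertDir d) (2 * ((dist x Q + s) / κ)) ⊆ Ω) →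
      ‖gnorm2 u x‖ₑ ≤ B * (hardyTail volume κ Q
        ((truncatedCone Ω (κ + 1) (3 * h) Q).indicator fun z => ‖gnorm1 (pdLast u) z‖ₑ) x +
        ⨆ z ∈ ball (x + h • vertDir d) (h / κ), ‖gnorm1 u z‖ₑ) := by
  obtain ⟨C₁, hC₁⟩ := exists_lintegral_enorm_pder_pder_pdLast_le hd hκ
  obtain ⟨C₂, hC₂⟩ := exists_enorm_pder_pder_le_div_mul_iSup_gnorm1 d
  have hκ₀ : 0 < κ := two_pos.trans_le hκ
  have hhκ : 0 < h / κ := div_pos hh hκ₀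
  refine ⟨d * (C₁ + C₂ / (h / κ).toNNReal), fun Ω u Q x hΩ hu hQ hx hxQ hball => ?_⟩
  rw [ENNReal.coe_mul, ENNReal.coe_add, ENNReal.coe_div (by simpa using hhκ), ENNReal.coe_natCast,
    mul_assoc]
  refine enorm_gnorm2_le fun i j => ?_
  have hρ : 0 < dist x Q := dist_pos.2 fun hxQ => (hΩ.frontier_eq ▸ hQ).2 (hxQ ▸ hx)
  have hsegment : ∀ s ∈ Icc 0 h, x + s • vertDir d ∈ Ω := fun s hs =>
    hball s hs (mem_ball_self
      (mul_pos two_pos (div_pos (add_pos_of_pos_of_nonneg hρ hs.1) hκ₀)))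
  have hball_top : ball (x + h • vertDir d) (2 * (h / κ)) ⊆ Ω :=
    (ball_subset_ball (by gcongr; linarith)).trans (hball h (right_mem_Icc.2 hh.le))
  have htop := hC₂ u (x + h • vertDir d) (h / κ) hhκ (hu.mono hball_top) i j
  have hvertical := hC₁ Ω u Q x h hΩ hu hQ hx hxQ hball i j
  refine (enorm_pder_pder_le_add_lintegral hd hh.le
    (fun s hs => hu.contDiffAt hΩ (hsegment s hs)) i j).trans ?_
  rw [add_comm, mul_add]
  exact add_le_add (hvertical.trans (by gcongr; exact le_self_add))
    (htop.trans (by gcongr; exact le_add_self))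

end GradientNorms

section SquareFunction

theorem setLIntegral_add_const_sq_mul_le {α : Type*} [MeasurableSpace α] (μ : Measure α)
    {w : α → ℝ≥0∞} (hw : Measurable w) (f : α → ℝ≥0∞) (c : ℝ≥0∞) (s : Set α) :
    ∫⁻ x in s, (f x + c) ^ 2 * w x ∂μ ≤
      2 * ((∫⁻ x in s, f x ^ 2 * w x ∂μ) + c ^ 2 * ∫⁻ x in s, w x ∂μ) := by
  have hsq : ∀ x, (f x + c) ^ 2 ≤ 2 * (f x ^ 2 + c ^ 2) := fun x => by
    simpa [show (2 : ℝ) - 1 = 1 by norm_num] using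
      ENNReal.rpow_add_le_mul_rpow_add_rpow (f x) c one_le_two
  calc ∫⁻ x in s, (f x + c) ^ 2 * w x ∂μ
      ≤ ∫⁻ x in s, 2 * (f x ^ 2 * w x + c ^ 2 * w x) ∂μ :=
        lintegral_mono fun x => (mul_le_mul_left (hsq x) _).trans_eq (by ring)
    _ = _ := by
        rw [lintegral_const_mul' _ _ ENNReal.ofNat_ne_top,
          lintegral_add_right _ (hw.const_mul _), lintegral_const_mul _ hw]

theorem sqFunOf_sq (γ : Euc d → Set (Euc d)) (g : Euc d → ℝ) (Q : Euc d) :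
    sqFunOf γ g Q ^ 2 = ∫⁻ x in γ Q, ‖g x‖ₑ ^ 2 * edist x Q ^ ((2 : ℝ) - d) := by
  rw [sqFunOf, ← ENNReal.rpow_two, ← ENNReal.rpow_mul, div_mul_cancel₀ _ two_ne_zero,
    ENNReal.rpow_one]
  rfl

theorem lintegral_hardyTail_indicator_sq_mul_le (hd : 0 < d) {A : ℝ} (hA : 0 < A)
    {γ : Euc d → Set (Euc d)} {Q : Euc d} (hγ : MeasurableSet (γ Q)) {g : Euc d → ℝ}
    (hg : Measurable g) :
    ∫⁻ x, hardyTail volume A Q ((γ Q).indicator fun z => ‖g z‖ₑ) x ^ 2 *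
        edist x Q ^ ((2 : ℝ) - d) ≤
      ((volume : Measure (Euc d)).toSphere univ * ENNReal.ofReal A) ^ 2 * sqFunOf γ g Q ^ 2 := by
  have : NeZero d := ⟨hd.ne'⟩
  have hhardy := lintegral_hardyTail_sq_mul_le (volume : Measure (Euc d)) (Q := Q) one_pos hA
    (hg.enorm.indicator hγ).aemeasurable
  simp only [mul_one, finrank_euclideanSpace_fin, ENNReal.ofReal_one, div_one,
    ENNReal.rpow_one] at hhardy
  refine hhardy.trans_eq ?_
  rw [sqFunOf_sq, ← lintegral_indicator hγ]
  congr 2 with z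
  by_cases hz : z ∈ γ Q <;> simp [hz]

theorem setLIntegral_edist_rpow_le (hd : 0 < d) {h : ℝ} (hh : 0 ≤ h) {s : Set (Euc d)} {Q : Euc d}
    (hs : s ⊆ closedBall Q h) :
    ∫⁻ x in s, edist x Q ^ ((2 : ℝ) - d) ≤
      (volume : Measure (Euc d)).toSphere univ / 2 * ENNReal.ofReal h ^ 2 := by
  have : NeZero d := ⟨hd.ne'⟩
  have hpower := setLIntegral_closedBall_edist_rpow (volume : Measure (Euc d)) Q two_pos hh
  simp only [finrank_euclideanSpace_fin, ENNReal.ofReal_ofNat, ENNReal.rpow_two] at hpower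
  exact (lintegral_mono_set hs).trans_eq hpower

theorem exists_sqFunOf_le (hd : 0 < d) {A h : ℝ} (hA : 0 < A) (hh : 0 ≤ h) (B : ℝ≥0) :
    ∃ C : ℝ≥0, ∀ (γ γ' : Euc d → Set (Euc d)) (g g' : Euc d → ℝ) (Q : Euc d) (S : ℝ≥0∞),
      MeasurableSet (γ Q) → MeasurableSet (γ' Q) → Measurable g' → γ Q ⊆ closedBall Q h →
      (∀ x ∈ γ Q, ‖g x‖ₑ ≤
        B * (hardyTail volume A Q ((γ' Q).indicator fun z => ‖g' z‖ₑ) x + S)) →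
      sqFunOf γ g Q ≤ C * (sqFunOf γ' g' Q + S) := by
  set σ : ℝ≥0∞ := (volume : Measure (Euc d)).toSphere univ
  set c : ℝ≥0∞ := B ^ 2 * (2 * ((σ * ENNReal.ofReal A) ^ 2 + σ / 2 * ENNReal.ofReal h ^ 2))
  have hc : c ≠ ⊤ := by
    have hσ : σ ≠ ⊤ := measure_ne_top _ _
    finiteness
  refine ⟨NNReal.sqrt c.toNNReal, fun γ γ' g g' Q S hγ hγ' hg' hγh hpt => ?_⟩
  refine (ENNReal.pow_le_pow_left_iff two_ne_zero).1 ?_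
  rw [mul_pow, ← ENNReal.coe_pow, NNReal.sq_sqrt, ENNReal.coe_toNNReal hc, sqFunOf_sq]
  set T : Euc d → ℝ≥0∞ := hardyTail volume A Q ((γ' Q).indicator fun z => ‖g' z‖ₑ)
  set X : ℝ≥0∞ := sqFunOf γ' g' Q
  set w : Euc d → ℝ≥0∞ := fun x => edist x Q ^ ((2 : ℝ) - d)
  have hw : Measurable w := by fun_prop
  calc ∫⁻ x in γ Q, ‖g x‖ₑ ^ 2 * w x
      ≤ ∫⁻ x in γ Q, B ^ 2 * ((T x + S) ^ 2 * w x) := by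
        refine setLIntegral_mono' hγ fun x hx => ?_
        rw [← mul_assoc, ← mul_pow]
        gcongr
        exact hpt x hx
    _ ≤ B ^ 2 * (2 * ((∫⁻ x in γ Q, T x ^ 2 * w x) + S ^ 2 * ∫⁻ x in γ Q, w x)) := by
        rw [lintegral_const_mul' _ _ (by finiteness)]
        gcongr
        exact setLIntegral_add_const_sq_mul_le volume hw T S _
    _ ≤ B ^ 2 * (2 * ((σ * ENNReal.ofReal A) ^ 2 * X ^ 2 +
          S ^ 2 * (σ / 2 * ENNReal.ofReal h ^ 2))) := by
        gcongr
        · exact (setLIntegral_le_lintegral _ _).trans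
            (lintegral_hardyTail_indicator_sq_mul_le hd hA hγ' hg')
        · exact setLIntegral_edist_rpow_le hd hh hγh
    _ ≤ B ^ 2 * (2 * ((σ * ENNReal.ofReal A) ^ 2 * (X + S) ^ 2 +
          (X + S) ^ 2 * (σ / 2 * ENNReal.ofReal h ^ 2))) := by
        gcongr
        · exact le_self_add
        · exact le_add_self
    _ = c * (X + S) ^ 2 := by ring

end SquareFunction

section Domain

theorem ball_subset_closedBall_diff_thickening {X : Type*} [PseudoMetricSpace X] {s : Set X}
    {y c : X} {δ ρ : ℝ} (hs : ball y (2 * δ) ⊆ s) (hy : dist y c + δ ≤ ρ) :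
    ball y δ ⊆ closedBall c ρ \ thickening δ sᶜ := fun z hz => by
  refine ⟨mem_closedBall.2 ?_, fun hz_near => ?_⟩
  · linarith [dist_triangle z y c, mem_ball.1 hz]
  · obtain ⟨v, hv, hzv⟩ := mem_thickening_iff.1 hz_near
    exact hv (hs (by rw [mem_ball']; linarith [dist_triangle y z v, mem_ball'.1 hz]))

theorem closedBall_diff_thickening_compl_subset {X : Type*} [PseudoMetricSpace X] {s : Set X}
    {c : X} {δ ρ : ℝ} (hδ : 0 < δ) : closedBall c ρ \ thickening δ sᶜ ⊆ s :=
  fun _ hz => not_not.1 fun hzs => hz.2 (self_subset_thickening hδ _ hzs)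

end Domain

theorem squareFunction_lastVariable_general (hd : 0 < d) {Ω : Set (Euc d)} (hΩ : IsOpen Ω)
    {P : Euc d} {R ρ h b : ℝ} (hh : 0 < h) (hρ : R + 4 * h ≤ ρ) (hb : 1 ≤ b)
    {η : Euc (d - 1) → ℝ} {M : ℝ≥0} (hη : LipschitzWith M η)
    (hgraph : ball P ρ ∩ Ω = ball P ρ ∩ {x | η (graphCoord d x) < vertCoord d x}) :
    ∃ b' > 1, ∃ h' > 0, ∃ K : Set (Euc d), IsCompact K ∧ K ⊆ Ω ∧ ∃ C : ℝ≥0,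
      ∀ u : Euc d → ℝ, Biharmonic Ω u → ∀ Q ∈ ball P R ∩ frontier Ω,
        sqFunOf (truncatedCone Ω b h) (gnorm2 u) Q ≤
          C * (sqFunOf (truncatedCone Ω b' h') (gnorm1 (pdLast u)) Q +
            ⨆ x ∈ K, (‖gnorm1 u x‖₊ : ℝ≥0∞)) := by
  set κ : ℝ := 2 * (b * (1 + M))
  have hκ : 2 ≤ κ := le_mul_of_one_le_right two_pos.le (one_le_mul_of_one_le_of_one_le hb (by simp))
  have hhκ : 0 < h / κ := by positivity
  have hhκ_le : h / κ ≤ h := div_le_self hh.le (one_le_two.trans hκ)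
  obtain ⟨B, hB⟩ := exists_enorm_gnorm2_le hd hκ hh
  obtain ⟨C, hC⟩ := exists_sqFunOf_le hd (two_pos.trans_le hκ) hh.le B
  refine ⟨κ + 1, by linarith, 3 * h, by positivity,
    closedBall P (R + 3 * h) \ thickening (h / κ) Ωᶜ,
    (isCompact_closedBall _ _).diff isOpen_thickening,
    closedBall_diff_thickening_compl_subset hhκ, C, fun u hu Q hQ => ?_⟩
  refine hC _ _ _ _ Q _ (measurableSet_truncatedCone hΩ.measurableSet b h Q)
    (measurableSet_truncatedCone hΩ.measurableSet _ _ Q) (measurable_gnorm1 _)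
    (fun x hx => hx.2.2.le) fun x hx => ?_
  have hmem_iff : ∀ x ∈ ball P (R + 4 * h), x ∈ Ω ↔ η (graphCoord d x) < vertCoord d x :=
    fun x hx => by
      simpa [mem_inter_iff, ball_subset_ball hρ hx] using Set.ext_iff.1 hgraph x
  have hball : ∀ s ∈ Icc 0 h, ball (x + s • vertDir d) (2 * ((dist x Q + s) / κ)) ⊆ Ω :=
    fun s hs => by
      rw [mul_div_assoc', mul_div_mul_left _ _ two_ne_zero]
      exact ball_add_smul_vertDir_subset hd hΩ hb hη hmem_iff hQ.1 hx hs
  have htop : ball (x + h • vertDir d) (h / κ) ⊆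
      closedBall P (R + 3 * h) \ thickening (h / κ) Ωᶜ := by
    refine ball_subset_closedBall_diff_thickening
      ((ball_subset_ball ?_).trans (hball h (right_mem_Icc.2 hh.le))) ?_
    · gcongr
      exact le_add_of_nonneg_left dist_nonneg
    · have hh_dist : dist (x + h • vertDir d) x = h := by
        rw [dist_add_smul_vertDir hd, abs_of_nonneg hh.le]
      linarith [dist_triangle4 (x + h • vertDir d) x Q P, hx.2.2, mem_ball.1 hQ.1]
  refine (hB Ω u Q x hΩ hu hQ.2 hx.1 hx.2.2.le hball).trans ?_
  exact mul_le_mul_right (add_le_add_right (biSup_mono htop) _) _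

/-- Lemma 2.1: pointwise comparison of the square function of the full
gradient `S(∇u)` with the square function `S̃(D_d u)` of the vertical derivative, for
biharmonic `u`, near a boundary ball where `Ω` is the region above a Lipschitz graph. -/
theorem squareFunction_lastVariable
    (d : ℕ) (hd : 2 ≤ d) (Ω : Set (Euc d)) (hΩ : IsLipschitzDomain Ω)
    (P : Euc d) (hP : P ∈ frontier Ω) (r C₀ C₁ : ℝ) (hr : 0 < r)
    (h10 : 10 < C₁) (hC : C₁ < C₀) (hsub : Ω ⊆ ball P (C₀ * r))
    (η : Euc (d - 1) → ℝ) (M : ℝ≥0) (hη : LipschitzWith M η)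
    (hgraph : ball P (C₁ * r) ∩ Ω =
      ball P (C₁ * r) ∩ {x | η (graphCoord d x) < vertCoord d x}) :
    ∃ γ γ' : Euc d → Set (Euc d),
      IsRegularConeFamily Ω γ ∧ IsRegularConeFamily Ω γ' ∧
      ∃ K : Set (Euc d), IsCompact K ∧ K ⊆ Ω ∧ ∃ C : ℝ≥0,
        ∀ u : Euc d → ℝ, Biharmonic Ω u → ∀ Q ∈ ball P (5 * r) ∩ frontier Ω,
          sqFunOf γ (gnorm2 u) Q ≤
            C * (sqFunOf γ' (gnorm1 (pdLast u)) Q +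
              ⨆ x ∈ K, (‖gnorm1 u x‖₊ : ℝ≥0∞)) := by
  obtain ⟨b', hb', h', hh', hK⟩ := squareFunction_lastVariable_general (R := 5 * r)
    (two_pos.trans_le hd) hΩ.1 hr (by nlinarith) one_le_two hη hgraph
  exact ⟨_, _, isRegularConeFamily_truncatedCone Ω one_lt_two hr,
    isRegularConeFamily_truncatedCone Ω hb' hh', hK⟩

end
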